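/- arXiv:2512.14966 — 3 statements merged into one kernel-verified Lean document; each statement's English description precedes it below -/
import Mathlib

section
/- Let d ∈ ℕ with d ≥ 1. Then for every k ≥ 19^(2d−1) + 1 and every homeomorphism F : S_{ℓ∞^k} → S_{ℓ1^k} that does not increase support size, one has ω_F(1/d) ≥ 1/2, i.e., there exist x, y ∈ S_{ℓ∞^k} with ‖x − y‖_∞ ≤ 1/d and ‖F(x) − F(y)‖_1 ≥ 1/2. -/
/-- The sup norm (`ℓ∞` norm) on `ℝ^k`. -/
noncomputable def supNorm {k : ℕ} (x : Fin k → ℝ) : ℝ := ⨆ i, |x i|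

/-- The `ℓ1` norm on `ℝ^k`. -/
noncomputable def l1Norm {k : ℕ} (x : Fin k → ℝ) : ℝ := ∑ i, |x i|

/-!
The inverse of `F` preserves full support, so it maps open orthants into orthants, and being onto it
permutes them. If `x i = 0`, then `x` stays in its closed orthant when the sign at `i` is flipped;
the images of the unit vectors show that `F x` then stays in its orthant when the sign at a
coordinate `π i` is flipped, and so vanishes there. Hence, up to the permutation `π` of coordinates,
`F` does not enlarge the support of a nonnegative vector.

Cut the coordinates into consecutive shells of sizes growing by a factor `q`. Two step vectors
descending from `1` in steps of `1 / d`, one constant on the pairs of shells `{0, 1}, {2, 3}, …` and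
the other on the shifted pairs `{0}, {1, 2}, …`, are `1 / d` apart in sup norm. Averaging over all
rearrangements of the coordinates, the image of each spreads its mass uniformly over every pair,
leaving at most `1 / (q + 1)` of it on the smaller shells of the pairs. The smaller shells of one
pairing are the larger ones of the other, so some rearrangement makes the two images nearly
disjoint, hence at distance at least `2 - 4 / (q + 1)`.
-/

open Finset Filter Topology

/-- The closed orthant of `ℝ^ι` with sign pattern `s`; the signs `±1` are the units of `ℤ`. -/
def closedOrthant {ι : Type*} (s : ι → ℤˣ) : Set (ι → ℝ) := {x | ∀ i, 0 ≤ s i • x i}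

/-- The open orthant of `ℝ^ι` with sign pattern `s`. -/
def openOrthant {ι : Type*} (s : ι → ℤˣ) : Set (ι → ℝ) := {x | ∀ i, 0 < s i • x i}

/-- The unit sphere of a seminorm. -/
def unitSphere {E : Type*} [AddCommGroup E] [Module ℝ E] (N : Seminorm ℝ E) : Set E :=
  {x | N x = 1}

lemma abs_units_smul (u : ℤˣ) (a : ℝ) : |u • a| = |a| := by
  rw [Units.smul_def, zsmul_eq_mul, abs_mul, abs_unit_intCast, one_mul]

lemma units_smul_smul_self (u : ℤˣ) (a : ℝ) : u • u • a = a := by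
  rw [smul_smul, Int.units_mul_self, one_smul]

lemma eq_zero_of_forall_units_smul_nonneg {a : ℝ} (h : ∀ u : ℤˣ, 0 ≤ u • a) : a = 0 := by
  have hpos := h 1
  have hneg := h (-1)
  rw [one_smul] at hpos
  rw [Units.neg_smul, one_smul] at hneg
  linarith

lemma units_smul_nonneg_of_pos {u : ℤˣ} {a b : ℝ} (ha : 0 < a) (hua : 0 ≤ u • a) (hb : 0 ≤ b) :
    0 ≤ u • b := by
  rcases Int.units_eq_one_or u with rfl | rfl
  · rwa [one_smul]
  · rw [Units.neg_smul, one_smul] at hua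
    linarith

section Orthants

variable {ι : Type*}

lemma mem_closedOrthant_one {x : ι → ℝ} : x ∈ closedOrthant 1 ↔ 0 ≤ x := by
  simp only [closedOrthant, Set.mem_ofPred_eq, Pi.one_apply, one_smul, Pi.le_def, Pi.zero_apply]

lemma exists_mem_closedOrthant (x : ι → ℝ) : ∃ s, x ∈ closedOrthant s := by
  have hsign : ∀ a : ℝ, ∃ u : ℤˣ, 0 ≤ u • a := fun a => by
    rcases le_total 0 a with ha | ha
    · exact ⟨1, by simpa using ha⟩
    · exact ⟨-1, by simpa [Units.neg_smul] using ha⟩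
  choose s hs using fun i => hsign (x i)
  exact ⟨s, hs⟩

lemma mem_openOrthant_iff {s : ι → ℤˣ} {x : ι → ℝ} :
    x ∈ openOrthant s ↔ x ∈ closedOrthant s ∧ ∀ i, x i ≠ 0 := by
  simp only [openOrthant, closedOrthant, Set.mem_ofPred_eq, ← forall_and, lt_iff_le_and_ne,
    ne_comm (a := (0 : ℝ)), ne_eq, smul_eq_zero_iff_eq]

lemma openOrthant_subset_closedOrthant (s : ι → ℤˣ) : openOrthant s ⊆ closedOrthant s :=
  fun _ hx => (mem_openOrthant_iff.1 hx).1

lemma eq_of_mem_openOrthant_of_mem_closedOrthant {s t : ι → ℤˣ} {x : ι → ℝ}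
    (hs : x ∈ openOrthant s) (ht : x ∈ closedOrthant t) : s = t := by
  funext i
  by_contra hne
  have hpos := hs i
  rw [Int.units_ne_iff_eq_neg.1 hne, Units.neg_smul] at hpos
  linarith [ht i]

lemma isClosed_closedOrthant (s : ι → ℤˣ) : IsClosed (closedOrthant s) := by
  simp only [closedOrthant, Set.ofPred_forall]
  exact isClosed_iInter fun i => isClosed_le continuous_const (by fun_prop)

lemma convex_openOrthant (s : ι → ℤˣ) : Convex ℝ (openOrthant s) := by
  intro x hx y hy a b ha hb hab i
  have hcomb : s i • (a • x + b • y) i = a • s i • x i + b • s i • y i := by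
    rw [Pi.add_apply, Pi.smul_apply, Pi.smul_apply, smul_add, smul_comm, smul_comm (s i) b]
  rw [hcomb]
  exact convex_Ioi (0 : ℝ) (hx i) (hy i) ha hb hab

lemma smul_mem_openOrthant {s : ι → ℤˣ} {c : ℝ} (hc : 0 < c) {x : ι → ℝ}
    (hx : x ∈ openOrthant s) : c • x ∈ openOrthant s := fun i => by
  rw [Pi.smul_apply, smul_comm]
  exact smul_pos hc (hx i)

lemma add_mem_openOrthant {s : ι → ℤˣ} {x y : ι → ℝ}
    (hx : x ∈ closedOrthant s) (hy : y ∈ openOrthant s) : x + y ∈ openOrthant s := fun i => by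
  rw [Pi.add_apply, smul_add]
  exact add_pos_of_nonneg_of_pos (hx i) (hy i)

lemma units_smul_one_mem_openOrthant (s : ι → ℤˣ) :
    (fun i => s i • (1 : ℝ)) ∈ openOrthant s := fun i => by
  rw [units_smul_smul_self]
  exact one_pos

/-- A sign can only change by passing through `0`. -/
lemma exists_subset_openOrthant_of_isPreconnected {P : Set (ι → ℝ)} (hP : IsPreconnected P)
    (hne : ∀ x ∈ P, ∀ i, x i ≠ 0) : ∃ s, P ⊆ openOrthant s := by
  rcases P.eq_empty_or_nonempty with rfl | ⟨z, hz⟩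
  · exact ⟨1, Set.empty_subset _⟩
  obtain ⟨s, hs⟩ := exists_mem_closedOrthant z
  refine ⟨s, fun x hx i => ?_⟩
  by_contra! hneg
  have hcont : ContinuousOn (fun y : ι → ℝ => s i • y i) P := by fun_prop
  obtain ⟨y, hy, hy0⟩ := hP.intermediate_value hx hz hcont ⟨hneg, hs i⟩
  exact hne y hy i ((smul_eq_zero_iff_eq _).1 hy0)

end Orthants

section Spheres

lemma inv_smul_mem_unitSphere {E : Type*} [AddCommGroup E] [Module ℝ E] {N : Seminorm ℝ E} {x : E}
    (hx : N x ≠ 0) : (N x)⁻¹ • x ∈ unitSphere N := by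
  rw [unitSphere, Set.mem_ofPred_eq, map_smul_eq_mul, norm_inv,
    Real.norm_of_nonneg (apply_nonneg N x), inv_mul_cancel₀ hx]

variable {ι : Type*} {N : Seminorm ℝ (ι → ℝ)}

lemma seminorm_pos_of_mem_openOrthant [Nonempty ι] (hN : ∀ x, N x = 0 → x = 0) {s : ι → ℤˣ}
    {x : ι → ℝ} (hx : x ∈ openOrthant s) : 0 < N x := by
  obtain ⟨i⟩ := ‹Nonempty ι›
  refine (apply_nonneg N x).lt_of_ne' fun h => (mem_openOrthant_iff.1 hx).2 i ?_
  rw [hN x h, Pi.zero_apply]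

lemma exists_unitSphere_mem_openOrthant [Nonempty ι] (hN : ∀ x, N x = 0 → x = 0)
    (s : ι → ℤˣ) : ∃ x : unitSphere N, (x : ι → ℝ) ∈ openOrthant s := by
  have hs := units_smul_one_mem_openOrthant s
  have hpos := seminorm_pos_of_mem_openOrthant hN hs
  exact ⟨⟨_, inv_smul_mem_unitSphere hpos.ne'⟩, smul_mem_openOrthant (inv_pos.2 hpos) hs⟩

lemma exists_unitSphere_support_eq_singleton (hN : ∀ x, N x = 0 → x = 0)
    (i : ι) : ∃ x : unitSphere N, 0 ≤ (x : ι → ℝ) ∧ Function.support (x : ι → ℝ) = {i} := by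
  classical
  have hpos : 0 < N (Pi.single i 1) :=
    (apply_nonneg N _).lt_of_ne' fun h => one_ne_zero (Pi.single_eq_zero_iff.1 (hN _ h))
  refine ⟨⟨_, inv_smul_mem_unitSphere hpos.ne'⟩,
    smul_nonneg (inv_pos.2 hpos).le (Pi.single_nonneg.2 zero_le_one), ?_⟩
  rw [Function.support_const_smul_of_ne_zero _ _ (inv_pos.2 hpos).ne',
    Pi.support_single_of_ne one_ne_zero]

lemma eq_of_support_subset_singleton {s : ι → ℤˣ} {p : ι} {x y : unitSphere N}
    (hx : (x : ι → ℝ) ∈ closedOrthant s) (hy : (y : ι → ℝ) ∈ closedOrthant s)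
    (hxp : Function.support (x : ι → ℝ) ⊆ {p}) (hyp : Function.support (y : ι → ℝ) ⊆ {p}) :
    x = y := by
  classical
  have hsingle : ∀ z : unitSphere N, Function.support (z : ι → ℝ) ⊆ {p} →
      (z : ι → ℝ) = (z : ι → ℝ) p • Pi.single p 1 := fun z hz => by
    rw [← Pi.single_smul, smul_eq_mul, mul_one]
    funext j
    rcases eq_or_ne j p with rfl | hj
    · rw [Pi.single_eq_same]
    · rw [Pi.single_eq_of_ne hj, Function.support_subset_iff'.1 hz j hj]
  have hnorm : ∀ z : unitSphere N, Function.support (z : ι → ℝ) ⊆ {p} →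
      |(z : ι → ℝ) p| * N (Pi.single p 1) = 1 := fun z hz => by
    rw [← Real.norm_eq_abs, ← map_smul_eq_mul, ← hsingle z hz]
    exact z.2
  have habs : |(x : ι → ℝ) p| = |(y : ι → ℝ) p| :=
    mul_right_cancel₀ (right_ne_zero_of_mul_eq_one (hnorm x hxp))
      ((hnorm x hxp).trans (hnorm y hyp).symm)
  rw [← abs_units_smul (s p), ← abs_units_smul (s p) ((y : ι → ℝ) p), abs_of_nonneg (hx p),
    abs_of_nonneg (hy p), smul_left_cancel_iff] at habs
  rw [← Subtype.val_inj, hsingle x hxp, hsingle y hyp, habs]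

variable [Finite ι]

lemma continuous_seminorm_pi (N : Seminorm ℝ (ι → ℝ)) : Continuous N := by
  have := Fintype.ofFinite ι
  exact N.convexOn.locallyLipschitz.continuous

lemma closure_preimage_openOrthant (s : ι → ℤˣ) :
    closure ((↑) ⁻¹' openOrthant s : Set (unitSphere N)) = (↑) ⁻¹' closedOrthant s := by
  refine Set.Subset.antisymm (closure_minimal
    (Set.preimage_mono (openOrthant_subset_closedOrthant s))
    ((isClosed_closedOrthant s).preimage continuous_subtype_val)) fun x hx => ?_
  rw [closure_subtype, Subtype.image_preimage_coe]
  let path : ℝ → ι → ℝ := fun t => x + t • fun i => s i • (1 : ℝ)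
  have hpath : Continuous path := by fun_prop
  have hNpath : Tendsto (fun t => N (path t)) (𝓝[>] 0) (𝓝 1) := by
    have h := ((continuous_seminorm_pi N).comp hpath).tendsto 0
    simp only [path, Function.comp_apply, zero_smul, add_zero, x.2.out] at h
    exact h.mono_left nhdsWithin_le_nhds
  have hlim : Tendsto (fun t => (N (path t))⁻¹ • path t) (𝓝[>] 0) (𝓝 x) := by
    simpa [path] using
      (hNpath.inv₀ one_ne_zero).smul ((hpath.tendsto 0).mono_left nhdsWithin_le_nhds)
  refine mem_closure_of_tendsto hlim ?_
  filter_upwards [self_mem_nhdsWithin, hNpath.eventually_const_lt one_pos] with t ht hpos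
  exact ⟨inv_smul_mem_unitSphere hpos.ne', smul_mem_openOrthant (inv_pos.2 hpos)
    (add_mem_openOrthant hx (smul_mem_openOrthant ht (units_smul_one_mem_openOrthant s)))⟩

lemma isPreconnected_preimage_openOrthant [Nonempty ι] (hN : ∀ x, N x = 0 → x = 0)
    (s : ι → ℤˣ) : IsPreconnected ((↑) ⁻¹' openOrthant s : Set (unitSphere N)) := by
  have hpos := fun x (hx : x ∈ openOrthant s) => seminorm_pos_of_mem_openOrthant hN hx
  have himage : (↑) '' ((↑) ⁻¹' openOrthant s : Set (unitSphere N)) =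
      (fun x => (N x)⁻¹ • x) '' openOrthant s := by
    rw [Subtype.image_preimage_coe]
    refine Set.Subset.antisymm (fun x hx => ⟨x, hx.2, ?_⟩) ?_
    · simp only [hx.1.out, inv_one, one_smul]
    · rintro _ ⟨x, hx, rfl⟩
      exact ⟨inv_smul_mem_unitSphere (hpos x hx).ne',
        smul_mem_openOrthant (inv_pos.2 (hpos x hx)) hx⟩
  rw [IsInducing.subtypeVal.isPreconnected_image.symm, himage]
  exact (convex_openOrthant s).isPreconnected.image _
    (((continuous_seminorm_pi N).continuousOn.inv₀ fun x hx => (hpos x hx).ne').smul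
      continuousOn_id)

end Spheres

section Homeomorphisms

variable {ι : Type*} [Finite ι] [Nonempty ι] {N M : Seminorm ℝ (ι → ℝ)}

lemma exists_mapsTo_closedOrthant (hM : ∀ x, M x = 0 → x = 0)
    {g : unitSphere M → unitSphere N} (hg : Continuous g)
    (hfull : ∀ y : unitSphere M, (∀ i, (y : ι → ℝ) i ≠ 0) → ∀ i, (g y : ι → ℝ) i ≠ 0) (s : ι → ℤˣ) :
    ∃ t, ∀ y : unitSphere M, (y : ι → ℝ) ∈ closedOrthant s →
      (g y : ι → ℝ) ∈ closedOrthant t := by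
  have hcont : Continuous fun y => (g y : ι → ℝ) := continuous_subtype_val.comp hg
  obtain ⟨t, ht⟩ := exists_subset_openOrthant_of_isPreconnected
    ((isPreconnected_preimage_openOrthant hM s).image _ hcont.continuousOn)
    (Set.forall_mem_image.2 fun y hy => hfull y (mem_openOrthant_iff.1 hy).2)
  have hopen : Set.MapsTo (fun y => (g y : ι → ℝ)) ((↑) ⁻¹' openOrthant s) (closedOrthant t) :=
    fun y hy => openOrthant_subset_closedOrthant t (ht (Set.mem_image_of_mem _ hy))
  refine ⟨t, fun y hy => hopen.closure_left hcont (isClosed_closedOrthant t) ?_⟩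
  rwa [closure_preimage_openOrthant]

/-- The inverse induces a surjection on the finite set of sign patterns, hence a bijection. -/
lemma exists_perm_mem_closedOrthant_iff (hN : ∀ x, N x = 0 → x = 0) (hM : ∀ x, M x = 0 → x = 0)
    (e : unitSphere N ≃ₜ unitSphere M)
    (hfull : ∀ y : unitSphere M, (∀ i, (y : ι → ℝ) i ≠ 0) → ∀ i, (e.symm y : ι → ℝ) i ≠ 0) :
    ∃ φ : Equiv.Perm (ι → ℤˣ), ∀ s (x : unitSphere N),
      (e x : ι → ℝ) ∈ closedOrthant s ↔ (x : ι → ℝ) ∈ closedOrthant (φ s) := by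
  choose φ hφ using exists_mapsTo_closedOrthant hM e.symm.continuous hfull
  have hmem : ∀ {s} {x : unitSphere N}, (e x : ι → ℝ) ∈ closedOrthant s →
      (x : ι → ℝ) ∈ closedOrthant (φ s) := fun {s x} h => by
    simpa only [e.symm_apply_apply] using hφ s (e x) h
  have hsurj : Function.Surjective φ := fun t => by
    obtain ⟨x, hx⟩ := exists_unitSphere_mem_openOrthant hN t
    obtain ⟨s, hs⟩ := exists_mem_closedOrthant (e x : ι → ℝ)
    exact ⟨s, (eq_of_mem_openOrthant_of_mem_closedOrthant hx (hmem hs)).symm⟩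
  have hinj : Function.Injective φ := Finite.injective_iff_surjective.2 hsurj
  refine ⟨Equiv.ofBijective φ ⟨hinj, hsurj⟩, fun s x => ⟨hmem, fun hx => ?_⟩⟩
  have hopen : Set.MapsTo (fun x => (e x : ι → ℝ)) ((↑) ⁻¹' openOrthant (φ s))
      (closedOrthant s) := fun z hz => by
    obtain ⟨t, ht⟩ := exists_mem_closedOrthant (e z : ι → ℝ)
    rwa [hinj (eq_of_mem_openOrthant_of_mem_closedOrthant hz (hmem ht))]
  refine hopen.closure_left (continuous_subtype_val.comp e.continuous)
    (isClosed_closedOrthant s) ?_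
  rwa [closure_preimage_openOrthant]

omit [Nonempty ι] in
lemma forall_symm_ne_zero_of_ncard_support_le (e : unitSphere N ≃ₜ unitSphere M)
    (hsupp : ∀ x, (Function.support (e x : ι → ℝ)).ncard ≤
      (Function.support (x : ι → ℝ)).ncard)
    (y : unitSphere M) (hy : ∀ i, (y : ι → ℝ) i ≠ 0) (i : ι) : (e.symm y : ι → ℝ) i ≠ 0 := by
  have hle := hsupp (e.symm y)
  rw [e.apply_symm_apply, show Function.support (y : ι → ℝ) = Set.univ from
    Set.eq_univ_of_forall hy] at hle
  exact Set.eq_univ_iff_forall.1 (Set.eq_of_subset_of_ncard_le (Set.subset_univ _) hle) i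

lemma exists_perm_support_subset_singleton (e : unitSphere N ≃ₜ unitSphere M)
    (hsupp : ∀ x, (Function.support (e x : ι → ℝ)).ncard ≤
      (Function.support (x : ι → ℝ)).ncard)
    {s : ι → ℤˣ} {a : ι → unitSphere N} (has : ∀ i, (e (a i) : ι → ℝ) ∈ closedOrthant s)
    (ha : ∀ i, Function.support (a i : ι → ℝ) = {i}) :
    ∃ π : Equiv.Perm ι, ∀ i, Function.support (e (a i) : ι → ℝ) ⊆ {π i} := by
  have hp : ∀ i, ∃ p, Function.support (e (a i) : ι → ℝ) ⊆ {p} := fun i => by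
    rw [← Set.ncard_le_one_iff_subset_singleton, ← Set.ncard_singleton i, ← ha i]
    exact hsupp (a i)
  choose p hp using hp
  have hinj : Function.Injective p := fun i j hij => by
    have haij := e.injective (eq_of_support_subset_singleton (has i) (has j) (hp i) (hij ▸ hp j))
    rw [← Set.singleton_eq_singleton_iff, ← ha i, ← ha j, haij]
  exact ⟨Equiv.ofBijective p (Finite.injective_iff_bijective.1 hinj), hp⟩

lemma exists_perm_support_subset_image (hN : ∀ x, N x = 0 → x = 0)
    (hM : ∀ x, M x = 0 → x = 0) (e : unitSphere N ≃ₜ unitSphere M)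
    (hsupp : ∀ x, (Function.support (e x : ι → ℝ)).ncard ≤
      (Function.support (x : ι → ℝ)).ncard) :
    ∃ π : Equiv.Perm ι, ∀ x : unitSphere N, 0 ≤ (x : ι → ℝ) →
      Function.support (e x : ι → ℝ) ⊆ π '' Function.support (x : ι → ℝ) := by
  classical
  obtain ⟨φ, hφ⟩ := exists_perm_mem_closedOrthant_iff hN hM e
    (forall_symm_ne_zero_of_ncard_support_le e hsupp)
  choose a ha0 ha using exists_unitSphere_support_eq_singleton hN
  obtain ⟨s, hs⟩ := φ.surjective 1
  have has : ∀ i, (e (a i) : ι → ℝ) ∈ closedOrthant s := fun i => by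
    rw [hφ, hs, mem_closedOrthant_one]
    exact ha0 i
  obtain ⟨π, hπ⟩ := exists_perm_support_subset_singleton e hsupp has ha
  refine ⟨π, fun x hx m hm => ?_⟩
  obtain ⟨i, rfl⟩ := π.surjective m
  refine Set.mem_image_of_mem π fun hxi => hm (eq_zero_of_forall_units_smul_nonneg fun u => ?_)
  -- With sign `u` at `π i`, the orthant still contains each `e (a j)`, `j ≠ i`, hence also `e x`.
  let t := Function.update s (π i) u
  have hat : ∀ j, j ≠ i → (e (a j) : ι → ℝ) ∈ closedOrthant t := fun j hj m => by
    rcases eq_or_ne m (π i) with rfl | hm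
    · have hzero := Function.support_subset_iff'.1 (hπ j) (π i) (π.injective.ne hj.symm)
      rw [hzero, smul_zero]
    · simpa only [t, Function.update_of_ne hm] using has j m
  have hxt : (x : ι → ℝ) ∈ closedOrthant (φ t) := fun j => by
    rcases eq_or_ne j i with rfl | hj
    · rw [hxi, smul_zero]
    · have hajj : (a j : ι → ℝ) j ≠ 0 := by
        rw [← Function.mem_support, ha j, Set.mem_singleton_iff]
      exact units_smul_nonneg_of_pos ((ha0 j j).lt_of_ne' hajj)
        ((hφ t (a j)).1 (hat j hj) j) (hx j)
  simpa only [t, Function.update_self] using (hφ t x).2 hxt (π i)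

end Homeomorphisms

section Averaging

variable {α : Type*} [Fintype α] [DecidableEq α]

lemma sum_perm_apply_symm_eq {β A : Type*} [AddCommMonoid A] (Φ : (α → β) → α → A)
    {x : α → β} {p q : α} (h : x p = x q) :
    ∑ σ : Equiv.Perm α, Φ (x ∘ σ) (σ.symm p) = ∑ σ : Equiv.Perm α, Φ (x ∘ σ) (σ.symm q) := by
  have hswap : x ∘ Equiv.swap p q = x := by
    rw [Equiv.comp_swap_eq_update, h, Function.update_eq_self, ← h, Function.update_eq_self]
  rw [← Equiv.sum_comp (Equiv.mulLeft (Equiv.swap p q))]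
  refine Finset.sum_congr rfl fun σ _ => ?_
  change Φ (x ∘ (Equiv.swap p q * σ)) ((Equiv.swap p q * σ).symm p) = _
  rw [Equiv.Perm.coe_mul, ← Function.comp_assoc, hswap, Equiv.Perm.mul_def,
    Equiv.symm_trans_apply, Equiv.symm_swap, Equiv.swap_apply_left]

omit [DecidableEq α] in
lemma mul_sum_le_sum_of_fiberwise_card_le {β : Type*} [DecidableEq β] {w : α → ℝ} {x : α → β}
    (hw : ∀ p, 0 ≤ w p) (hconst : ∀ p q, x p = x q → w p = w q) {m : ℕ} {T : Finset α}
    (hT : ∀ p, w p ≠ 0 → m * #{a ∈ T | x a = x p} ≤ #{a | x a = x p}) :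
    m * ∑ p ∈ T, w p ≤ ∑ p, w p := by
  have hfiber : ∀ (S : Finset α) p, ∑ a ∈ S with x a = x p, w a = #{a ∈ S | x a = x p} * w p :=
    fun S p => by
      rw [← nsmul_eq_mul]
      exact Finset.sum_eq_card_nsmul fun a ha => hconst a p (Finset.mem_filter.1 ha).2
  have hmaps : ∀ S : Finset α, ∀ a ∈ S, x a ∈ univ.image x := fun S a _ =>
    Finset.mem_image_of_mem x (mem_univ a)
  rw [← Finset.sum_fiberwise_of_maps_to (hmaps T) w,
    ← Finset.sum_fiberwise_of_maps_to (hmaps univ) w, Finset.mul_sum]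
  refine Finset.sum_le_sum fun c hc => ?_
  obtain ⟨p, -, rfl⟩ := Finset.mem_image.1 hc
  rw [hfiber, hfiber, ← mul_assoc]
  rcases eq_or_ne (w p) 0 with hp | hp
  · rw [hp, mul_zero, mul_zero]
  · exact mul_le_mul_of_nonneg_right (mod_cast hT p hp) (hw p)

lemma mul_sum_perm_sum_abs_le_card {F : (α → ℝ) → α → ℝ} {x : α → ℝ}
    (hone : ∀ σ : Equiv.Perm α, ∑ i, |F (x ∘ σ) i| = 1)
    (hsupp : ∀ σ : Equiv.Perm α, Function.support (F (x ∘ σ)) ⊆ Function.support (x ∘ σ))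
    {m : ℕ} {T : Finset α}
    (hT : ∀ p, x p ≠ 0 → m * #{a ∈ T | x a = x p} ≤ #{a | x a = x p}) :
    m * ∑ σ : Equiv.Perm α, ∑ p ∈ T, |F (x ∘ σ) (σ.symm p)| ≤ Fintype.card (Equiv.Perm α) := by
  let w : α → ℝ := fun p => ∑ σ : Equiv.Perm α, |F (x ∘ σ) (σ.symm p)|
  have hw : ∀ p, w p ≠ 0 → x p ≠ 0 := fun p hp hxp => hp <| Finset.sum_eq_zero fun σ _ => by
    rw [Function.support_subset_iff'.1 (hsupp σ) (σ.symm p) (by simpa using hxp), abs_zero]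
  calc m * ∑ σ : Equiv.Perm α, ∑ p ∈ T, |F (x ∘ σ) (σ.symm p)|
      = m * ∑ p ∈ T, w p := by rw [Finset.sum_comm]
    _ ≤ ∑ p, w p := mul_sum_le_sum_of_fiberwise_card_le
        (fun p => Finset.sum_nonneg fun σ _ => abs_nonneg _)
        (fun p q => sum_perm_apply_symm_eq fun y i => |F y i|) fun p hp => hT p (hw p hp)
    _ = ∑ σ : Equiv.Perm α, ∑ p, |F (x ∘ σ) (σ.symm p)| := Finset.sum_comm
    _ = Fintype.card (Equiv.Perm α) := by
        simp only [fun σ : Equiv.Perm α => Equiv.sum_comp σ.symm fun i => |F (x ∘ σ) i|, hone,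
          Finset.sum_const, Finset.card_univ, nsmul_eq_mul, mul_one]

lemma sum_abs_add_sum_abs_sub_le (u v : α → ℝ) (T : Finset α) :
    ∑ i, |u i| + ∑ i, |v i| - 2 * (∑ i ∈ T, |u i| + ∑ i ∈ Tᶜ, |v i|) ≤ ∑ i, |u i - v i| := by
  have hT : ∑ i ∈ T, |v i| - ∑ i ∈ T, |u i| ≤ ∑ i ∈ T, |u i - v i| := by
    rw [← Finset.sum_sub_distrib]
    exact Finset.sum_le_sum fun i _ => abs_sub_comm (u i) (v i) ▸ abs_sub_abs_le_abs_sub _ _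
  have hTc : ∑ i ∈ Tᶜ, |u i| - ∑ i ∈ Tᶜ, |v i| ≤ ∑ i ∈ Tᶜ, |u i - v i| := by
    rw [← Finset.sum_sub_distrib]
    exact Finset.sum_le_sum fun i _ => abs_sub_abs_le_abs_sub _ _
  simp only [← Finset.sum_add_sum_compl T]
  linarith

lemma exists_perm_two_sub_le_sum_abs_sub {F : (α → ℝ) → α → ℝ} {x y : α → ℝ}
    (hxone : ∀ σ : Equiv.Perm α, ∑ i, |F (x ∘ σ) i| = 1)
    (hyone : ∀ σ : Equiv.Perm α, ∑ i, |F (y ∘ σ) i| = 1)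
    (hxsupp : ∀ σ : Equiv.Perm α, Function.support (F (x ∘ σ)) ⊆ Function.support (x ∘ σ))
    (hysupp : ∀ σ : Equiv.Perm α, Function.support (F (y ∘ σ)) ⊆ Function.support (y ∘ σ))
    {m : ℕ} (hm : 0 < m) {T : Finset α}
    (hxT : ∀ p, x p ≠ 0 → m * #{a ∈ T | x a = x p} ≤ #{a | x a = x p})
    (hyT : ∀ p, y p ≠ 0 → m * #{a ∈ Tᶜ | y a = y p} ≤ #{a | y a = y p}) :
    ∃ σ : Equiv.Perm α, 2 - 4 / (m : ℝ) ≤ ∑ i, |F (x ∘ σ) i - F (y ∘ σ) i| := by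
  have hm0 : (0 : ℝ) < m := Nat.cast_pos.2 hm
  obtain ⟨σ, -, hσ⟩ : ∃ σ ∈ (univ : Finset (Equiv.Perm α)),
      m * (∑ p ∈ T, |F (x ∘ σ) (σ.symm p)| + ∑ p ∈ Tᶜ, |F (y ∘ σ) (σ.symm p)|) ≤ 2 := by
    refine Finset.exists_le_of_sum_le Finset.univ_nonempty ?_
    rw [← Finset.mul_sum, Finset.sum_add_distrib, Finset.sum_const, nsmul_eq_mul,
      Finset.card_univ]
    linarith [mul_sum_perm_sum_abs_le_card hxone hxsupp hxT,
      mul_sum_perm_sum_abs_le_card hyone hysupp hyT]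
  refine ⟨σ, ?_⟩
  have hdist := sum_abs_add_sum_abs_sub_le (fun p => F (x ∘ σ) (σ.symm p))
    (fun p => F (y ∘ σ) (σ.symm p)) T
  rw [Equiv.sum_comp σ.symm fun i => |F (x ∘ σ) i|, Equiv.sum_comp σ.symm fun i => |F (y ∘ σ) i|,
    Equiv.sum_comp σ.symm fun i => |F (x ∘ σ) i - F (y ∘ σ) i|, hxone, hyone] at hdist
  rw [mul_comm, ← le_div_iff₀ hm0] at hσ
  have hfour : 4 / (m : ℝ) = 2 * (2 / m) := by ring
  linarith

end Averaging

section Shells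

lemma card_filter_log_succ_eq {q k i : ℕ} (hq : 1 < q) (hk : q ^ (i + 1) ≤ k + 1) :
    #{n : Fin k | Nat.log q (n + 1) = i} = q ^ (i + 1) - q ^ i := by
  have hpow : q ^ i ≤ q ^ (i + 1) := Nat.pow_le_pow_right hq.le i.le_succ
  have hpos : 0 < q ^ i := Nat.pow_pos (by omega)
  have hshell : ({n : Fin k | Nat.log q (n + 1) = i} : Finset (Fin k)) =
      ({n : Fin k | (n : ℕ) < q ^ (i + 1) - 1} : Finset (Fin k)) \
        ({n : Fin k | (n : ℕ) < q ^ i - 1} : Finset (Fin k)) := by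
    ext n
    simp only [Finset.mem_filter, Finset.mem_univ, true_and, Finset.mem_sdiff,
      Nat.log_eq_iff (.inr ⟨hq, n.val.succ_ne_zero⟩)]
    omega
  rw [hshell, Finset.card_sdiff_of_subset, Fin.card_filter_val_lt, Fin.card_filter_val_lt]
  · omega
  · exact Finset.monotone_filter_right _ fun n _ hn => by omega

lemma card_filter_log_succ_eq_succ {q k i : ℕ} (hq : 1 < q) (hk : q ^ (i + 2) ≤ k + 1) :
    #{n : Fin k | Nat.log q (n + 1) = i + 1} = q * #{n : Fin k | Nat.log q (n + 1) = i} := by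
  have hk' : q ^ (i + 1) ≤ k + 1 := (Nat.pow_le_pow_right hq.le (Nat.le_succ _)).trans hk
  rw [card_filter_log_succ_eq hq hk, card_filter_log_succ_eq hq hk', Nat.mul_sub, ← pow_succ',
    ← pow_succ']

/-- The step vector taking the value `max 0 (1 - j / d)` on the `j`-th pair of consecutive `q`-adic
shells `{n | Nat.log q (n + 1) = i}`. Shell `i` belongs to pair `(i + r) / 2`, so the two pairings
of neighbouring shells are `r = 0` and `r = 1`. -/
noncomputable def shellVector (d q k r : ℕ) : Fin k → ℝ :=
  fun n => max 0 (1 - ((Nat.log q (n + 1) + r) / 2 : ℕ) / (d : ℝ))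

variable {d q k r : ℕ}

lemma shellVector_nonneg (n : Fin k) : 0 ≤ shellVector d q k r n := le_max_left _ _

lemma shellVector_le_one (n : Fin k) : shellVector d q k r n ≤ 1 :=
  max_le zero_le_one (sub_le_self 1 (by positivity))

lemma shellVector_zero [NeZero k] (hr : r ≤ 1) : shellVector d q k r 0 = 1 := by
  have hpair : (Nat.log q (((0 : Fin k) : ℕ) + 1) + r) / 2 = 0 := by
    rw [Fin.val_zero, zero_add, Nat.log_one_right]
    omega
  rw [shellVector, hpair, Nat.cast_zero, zero_div, sub_zero, max_eq_right zero_le_one]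

lemma pair_lt_of_shellVector_ne_zero (hd : 0 < d) {n : Fin k} (hn : shellVector d q k r n ≠ 0) :
    (Nat.log q (n + 1) + r) / 2 < d := by
  have hd0 : (0 : ℝ) < d := Nat.cast_pos.2 hd
  by_contra! hle
  refine hn (max_eq_left (sub_nonpos.2 ?_))
  rwa [one_le_div hd0, Nat.cast_le]

lemma shellVector_eq_iff (hd : 0 < d) {p : Fin k} (hp : shellVector d q k r p ≠ 0) (n : Fin k) :
    shellVector d q k r n = shellVector d q k r p ↔
      (Nat.log q (n + 1) + r) / 2 = (Nat.log q (p + 1) + r) / 2 := by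
  refine ⟨fun h => ?_, fun h => by rw [shellVector, shellVector, h]⟩
  have hd0 : (d : ℝ) ≠ 0 := Nat.cast_ne_zero.2 hd.ne'
  have hvalue : ∀ m : Fin k, shellVector d q k r m ≠ 0 →
      shellVector d q k r m = 1 - ((Nat.log q (m + 1) + r) / 2 : ℕ) / (d : ℝ) := fun m hm =>
    (max_choice _ _).resolve_left hm
  have hn : shellVector d q k r n ≠ 0 := by rwa [h]
  rw [hvalue p hp, hvalue n hn, sub_right_inj, div_left_inj' hd0, Nat.cast_inj] at h
  exact h

lemma abs_shellVector_sub_le (n : Fin k) :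
    |shellVector d q k 0 n - shellVector d q k 1 n| ≤ 1 / d := by
  have hle : (Nat.log q (n + 1) + 0) / 2 ≤ (Nat.log q (n + 1) + 1) / 2 := by omega
  have hle' : (Nat.log q (n + 1) + 1) / 2 ≤ (Nat.log q (n + 1) + 0) / 2 + 1 := by omega
  rw [shellVector, shellVector, max_comm 0, max_comm 0]
  refine (abs_max_sub_max_le_abs _ _ _).trans ?_
  rw [sub_sub_sub_cancel_left, ← sub_div, abs_div, Nat.abs_cast]
  gcongr
  rw [abs_of_nonneg (sub_nonneg.2 (Nat.cast_le.2 hle)), sub_le_iff_le_add']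
  exact_mod_cast hle'

/-- Of the two shells `i` in a pair, the smaller one is the one with `i + r` even. -/
lemma succ_mul_card_filter_even_le (hd : 0 < d) (hq : 1 < q) (hr : r ≤ 1)
    (hk : q ^ (2 * d) ≤ k + 1) {p : Fin k} (hp : shellVector d q k r p ≠ 0) :
    (q + 1) * #{n ∈ ({n | Even (Nat.log q (n + 1) + r)} : Finset (Fin k)) |
        shellVector d q k r n = shellVector d q k r p} ≤
      #{n | shellVector d q k r n = shellVector d q k r p} := by
  have hj := pair_lt_of_shellVector_ne_zero hd hp
  simp only [Finset.filter_filter, shellVector_eq_iff hd hp]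
  set j := (Nat.log q (p + 1) + r) / 2
  rcases lt_or_ge (2 * j) r with hrj | hrj
  · rw [Finset.filter_false_of_mem, Finset.card_empty, mul_zero]
    · exact Nat.zero_le _
    · rintro n - ⟨⟨a, ha⟩, hn⟩
      omega
  have hlarge : q ^ (2 * j - r + 2) ≤ k + 1 :=
    (Nat.pow_le_pow_right hq.le (by omega)).trans hk
  have heven : ({n | Even (Nat.log q (n + 1) + r) ∧ (Nat.log q (n + 1) + r) / 2 = j} :
      Finset (Fin k)) = ({n | Nat.log q (n + 1) = 2 * j - r} : Finset (Fin k)) :=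
    Finset.filter_congr fun n _ => by rw [Nat.even_iff]; omega
  have hpair : ({n | (Nat.log q (n + 1) + r) / 2 = j} : Finset (Fin k)) =
      ({n | Nat.log q (n + 1) = 2 * j - r} : Finset (Fin k)) ∪
        ({n | Nat.log q (n + 1) = 2 * j - r + 1} : Finset (Fin k)) := by
    rw [← Finset.filter_or]
    exact Finset.filter_congr fun n _ => by omega
  rw [heven, hpair, Finset.card_union_of_disjoint, card_filter_log_succ_eq_succ hq hlarge]
  · linarith
  · exact Finset.disjoint_filter.2 fun n _ => by omega

end Shells

section Norms

variable {ι : Type*} [Fintype ι]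

/-- The `ℓ_p` norm on `ℝ^ι`, as a seminorm on the function space `ι → ℝ`. -/
noncomputable def lpSeminorm (ι : Type*) [Fintype ι] (p : ENNReal) [Fact (1 ≤ p)] :
    Seminorm ℝ (ι → ℝ) :=
  (normSeminorm ℝ (PiLp p fun _ : ι => ℝ)).comp (WithLp.linearEquiv p ℝ (ι → ℝ)).symm.toLinearMap

lemma eq_zero_of_lpSeminorm_eq_zero {p : ENNReal} [Fact (1 ≤ p)] {x : ι → ℝ}
    (hx : lpSeminorm ι p x = 0) : x = 0 :=
  (WithLp.linearEquiv p ℝ (ι → ℝ)).symm.map_eq_zero_iff.1 (norm_eq_zero.1 hx)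

variable {k : ℕ}

lemma lpSeminorm_top_eq_supNorm (x : Fin k → ℝ) : lpSeminorm (Fin k) ⊤ x = supNorm x :=
  PiLp.norm_eq_ciSup _

lemma lpSeminorm_one_eq_l1Norm (x : Fin k → ℝ) : lpSeminorm (Fin k) 1 x = l1Norm x :=
  PiLp.norm_eq_of_L1 _

lemma l1Norm_comp_perm (x : Fin k → ℝ) (σ : Equiv.Perm (Fin k)) : l1Norm (x ∘ σ) = l1Norm x :=
  Equiv.sum_comp σ fun i => |x i|

lemma supNorm_le [NeZero k] {x : Fin k → ℝ} {c : ℝ} (hx : ∀ i, |x i| ≤ c) : supNorm x ≤ c :=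
  ciSup_le hx

lemma supNorm_comp_perm (x : Fin k → ℝ) (σ : Equiv.Perm (Fin k)) : supNorm (x ∘ σ) = supNorm x :=
  σ.iSup_comp (g := fun i => |x i|)

lemma supNorm_shellVector [NeZero k] {d q r : ℕ} (hr : r ≤ 1) :
    supNorm (shellVector d q k r) = 1 := by
  have habs : ∀ n, |shellVector d q k r n| = shellVector d q k r n := fun n =>
    abs_of_nonneg (shellVector_nonneg n)
  refine le_antisymm (supNorm_le fun n => (habs n).trans_le (shellVector_le_one n)) ?_
  calc 1 = |shellVector d q k r 0| := by rw [habs, shellVector_zero hr]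
    _ ≤ supNorm (shellVector d q k r) :=
        le_ciSup (f := fun n => |shellVector d q k r n|) (Set.finite_range _).bddAbove 0

end Norms

lemma exists_two_sub_le_l1Norm_sub {d q k : ℕ} [NeZero k] (hd : 0 < d) (hq : 1 < q)
    (hk : q ^ (2 * d) ≤ k + 1) {F : (Fin k → ℝ) → Fin k → ℝ}
    (hF : ∀ x, supNorm x = 1 → l1Norm (F x) = 1) {π : Equiv.Perm (Fin k)}
    (hsupp : ∀ x, supNorm x = 1 → 0 ≤ x → Function.support (F x) ⊆ π '' Function.support x) :
    ∃ x y : Fin k → ℝ, supNorm x = 1 ∧ supNorm y = 1 ∧ supNorm (x - y) ≤ 1 / (d : ℝ) ∧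
      2 - 4 / ((q : ℝ) + 1) ≤ l1Norm (F x - F y) := by
  let v := shellVector d q k
  have hv : ∀ r ≤ 1, ∀ σ : Equiv.Perm (Fin k), supNorm (v r ∘ σ) = 1 := fun r hr σ => by
    rw [supNorm_comp_perm, supNorm_shellVector hr]
  have hone : ∀ r ≤ 1, ∀ σ : Equiv.Perm (Fin k), ∑ i, |(F (v r ∘ σ) ∘ π) i| = 1 :=
    fun r hr σ => (l1Norm_comp_perm _ π).trans (hF _ (hv r hr σ))
  have hsub : ∀ r ≤ 1, ∀ σ : Equiv.Perm (Fin k),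
      Function.support (F (v r ∘ σ) ∘ π) ⊆ Function.support (v r ∘ σ) := fun r hr σ i hi =>
    π.injective.mem_set_image.1 (hsupp _ (hv r hr σ) (fun j => shellVector_nonneg (σ j)) hi)
  let T : Finset (Fin k) := {n | Even (Nat.log q (n + 1) + 0)}
  have hT : Tᶜ = ({n | Even (Nat.log q (n + 1) + 1)} : Finset (Fin k)) := by
    ext n
    simp only [T, Finset.mem_compl, Finset.mem_filter, Finset.mem_univ, true_and, add_zero,
      Nat.even_add_one]
  have hsmall : ∀ p, v 0 p ≠ 0 → (q + 1) * #{n ∈ T | v 0 n = v 0 p} ≤ #{n | v 0 n = v 0 p} :=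
    fun _ => succ_mul_card_filter_even_le hd hq zero_le_one hk
  have hsmall' : ∀ p, v 1 p ≠ 0 → (q + 1) * #{n ∈ Tᶜ | v 1 n = v 1 p} ≤ #{n | v 1 n = v 1 p} :=
    fun _ => hT ▸ succ_mul_card_filter_even_le hd hq le_rfl hk
  obtain ⟨σ, hσ⟩ := exists_perm_two_sub_le_sum_abs_sub (F := fun x => F x ∘ π)
    (hone 0 zero_le_one) (hone 1 le_rfl) (hsub 0 zero_le_one) (hsub 1 le_rfl) q.succ_pos
    hsmall hsmall'
  refine ⟨v 0 ∘ σ, v 1 ∘ σ, hv 0 zero_le_one σ, hv 1 le_rfl σ,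
    supNorm_le fun i => abs_shellVector_sub_le (σ i), ?_⟩
  rw [← l1Norm_comp_perm _ π, ← Nat.cast_add_one]
  exact hσ

lemma two_pow_two_mul_le_nineteen_pow {d : ℕ} (hd : 1 ≤ d) : 2 ^ (2 * d) ≤ 19 ^ (2 * d - 1) :=
  calc 2 ^ (2 * d) ≤ 2 ^ (2 * (2 * d - 1)) := Nat.pow_le_pow_right two_pos (by omega)
    _ = 4 ^ (2 * d - 1) := pow_mul 2 2 _
    _ ≤ 19 ^ (2 * d - 1) := Nat.pow_le_pow_left (by norm_num) _

/-- As `q → ∞` the bound tends to `2`, the diameter of the `ℓ1` unit sphere. -/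
theorem stmt_0_general (d q k : ℕ) (hd : 1 ≤ d) (hq : 1 < q) (hk : q ^ (2 * d) ≤ k + 1)
    (F G : (Fin k → ℝ) → (Fin k → ℝ))
    (hFmaps : ∀ x, supNorm x = 1 → l1Norm (F x) = 1)
    (hGmaps : ∀ y, l1Norm y = 1 → supNorm (G y) = 1)
    (hFcont : ContinuousOn F {x | supNorm x = 1})
    (hGcont : ContinuousOn G {y | l1Norm y = 1})
    (hGF : ∀ x, supNorm x = 1 → G (F x) = x)
    (hFG : ∀ y, l1Norm y = 1 → F (G y) = y)
    (hsupp : ∀ x, supNorm x = 1 → {i | F x i ≠ 0}.ncard ≤ {i | x i ≠ 0}.ncard) :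
    ∃ x y : Fin k → ℝ, supNorm x = 1 ∧ supNorm y = 1 ∧
      supNorm (x - y) ≤ 1 / (d : ℝ) ∧ 2 - 4 / ((q : ℝ) + 1) ≤ l1Norm (F x - F y) := by
  have : NeZero k := ⟨by have := Nat.one_lt_pow (by omega : 2 * d ≠ 0) hq; omega⟩
  have hsup : unitSphere (lpSeminorm (Fin k) ⊤) = {x | supNorm x = 1} := by
    simp only [unitSphere, lpSeminorm_top_eq_supNorm]
  have hl1 : unitSphere (lpSeminorm (Fin k) 1) = {y | l1Norm y = 1} := by
    simp only [unitSphere, lpSeminorm_one_eq_l1Norm]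
  let e : PartialHomeomorph (Fin k → ℝ) (Fin k → ℝ) :=
    { toFun := F
      invFun := G
      source := unitSphere (lpSeminorm (Fin k) ⊤)
      target := unitSphere (lpSeminorm (Fin k) 1)
      map_source' := by rwa [hsup, hl1]
      map_target' := by rwa [hsup, hl1]
      left_inv' := by rwa [hsup]
      right_inv' := by rwa [hl1]
      continuousOn_toFun := by rwa [hsup]
      continuousOn_invFun := by rwa [hl1] }
  obtain ⟨π, hπ⟩ := exists_perm_support_subset_image (fun _ => eq_zero_of_lpSeminorm_eq_zero)
    (fun _ => eq_zero_of_lpSeminorm_eq_zero) e.toHomeomorphSourceTarget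
    fun x => hsupp x (hsup.subset x.2)
  exact exists_two_sub_le_l1Norm_sub hd hq hk hFmaps fun x hx => hπ ⟨x, hsup.superset hx⟩

/-- For `d ≥ 1`, `k ≥ 19^(2d-1) + 1`, and any homeomorphism `F` from the unit
sphere of `ℓ∞^k` onto the unit sphere of `ℓ1^k` (with inverse `G`) that does not increase
support size, there are `x, y` on the sphere with `‖x - y‖_∞ ≤ 1/d` and
`‖F x - F y‖_1 ≥ 1/2`. -/
theorem stmt_0 (d : ℕ) (hd : 1 ≤ d) (k : ℕ) (hk : 19 ^ (2 * d - 1) + 1 ≤ k)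
    (F G : (Fin k → ℝ) → (Fin k → ℝ))
    (hFmaps : ∀ x, supNorm x = 1 → l1Norm (F x) = 1)
    (hGmaps : ∀ y, l1Norm y = 1 → supNorm (G y) = 1)
    (hFcont : ContinuousOn F {x | supNorm x = 1})
    (hGcont : ContinuousOn G {y | l1Norm y = 1})
    (hGF : ∀ x, supNorm x = 1 → G (F x) = x)
    (hFG : ∀ y, l1Norm y = 1 → F (G y) = y)
    (hsupp : ∀ x, supNorm x = 1 → {i | F x i ≠ 0}.ncard ≤ {i | x i ≠ 0}.ncard) :
    ∃ x y : Fin k → ℝ, supNorm x = 1 ∧ supNorm y = 1 ∧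
      supNorm (x - y) ≤ 1 / (d : ℝ) ∧ 1 / 2 ≤ l1Norm (F x - F y) := by
  have hk2 := two_pow_two_mul_le_nineteen_pow hd
  obtain ⟨x, y, hx, hy, hxy, hF⟩ := stmt_0_general d 2 k hd one_lt_two (by omega) F G hFmaps
    hGmaps hFcont hGcont hGF hFG hsupp
  exact ⟨x, y, hx, hy, hxy, le_trans (by norm_num) hF⟩
end

section
/- Let k ∈ ℕ with k ≥ 1 and let E and F be k-dimensional real normed vector spaces. Then every continuous injective map from the unit sphere of E to the unit sphere of F is surjective. -/
/-!
Let `g` be `C¹` on a bounded convex open set `U`, vanishing on its frontier. For small `t` the map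
`id + t • g` is a diffeomorphism of `U`, so the integral over `U` of its Jacobian is the volume of
`U`; being polynomial in `t`, the integral is the volume of `U` for every `t`, in particular for
`t = 1` (Milnor, Rogers). A `C¹` retraction onto the unit sphere would have zero Jacobian, so there
is none, and hence every continuous map moving each point of the unit sphere by less than `1` has a
zero.

If a continuous injective self-map `f` of the Euclidean sphere `S` misses `v`, then `f` extends to a
continuous `F : V → S \ {v}` by Tietze's theorem, because the punctured sphere is homeomorphic to a
vector space. Extend `f⁻¹` to a continuous map on `V` and approximate it by a `C¹` map `Q` without
zeros on the null set `S`. Then `Q ∘ F` is close to the identity on `S` but has no zero, a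
contradiction. Rescaling by gauges reduces arbitrary norms to the Euclidean one.
-/

open MeasureTheory Metric Set Topology Polynomial
open scoped NNReal

section PolynomialFamilies

theorem exists_polynomial_eval_eq_integral {α : Type*} [MeasurableSpace α] {μ : Measure α}
    {p : α → ℝ[X]} {n : ℕ} (hdeg : ∀ x, (p x).natDegree ≤ n)
    (hint : ∀ t, Integrable (fun x => (p x).eval t) μ) :
    ∃ q : ℝ[X], ∀ t, q.eval t = ∫ x, (p x).eval t ∂μ := by
  let s := Finset.range (n + 1)
  let v : ℕ → ℝ := Nat.cast
  have hinterp (x : α) : p x = Lagrange.interpolate s v fun i => (p x).eval (v i) :=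
    Lagrange.eq_interpolate Nat.cast_injective.injOn <| by
      rw [Finset.card_range]
      exact (degree_le_of_natDegree_le (hdeg x)).trans_lt (mod_cast n.lt_succ_self)
  refine ⟨Lagrange.interpolate s v fun i => ∫ x, (p x).eval (v i) ∂μ, fun t => ?_⟩
  calc (Lagrange.interpolate s v fun i => ∫ x, (p x).eval (v i) ∂μ).eval t
      = ∑ i ∈ s, ∫ x, (p x).eval (v i) * (Lagrange.basis s v i).eval t ∂μ := by
        simp only [Lagrange.interpolate_apply, eval_finsetSum, eval_mul, eval_C,
          integral_mul_const]
    _ = ∫ x, ∑ i ∈ s, (p x).eval (v i) * (Lagrange.basis s v i).eval t ∂μ :=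
        (integral_finsetSum s fun i _ => (hint (v i)).mul_const _).symm
    _ = ∫ x, (p x).eval t ∂μ := by
        congr with x
        conv_rhs => rw [hinterp x]
        simp only [Lagrange.interpolate_apply, eval_finsetSum, eval_mul, eval_C]

theorem eval_reverse_charpoly_neg {R M : Type*} [CommRing R] [AddCommGroup M] [Module R M]
    [Module.Finite R M] [Module.Free R M] (A : M →ₗ[R] M) (t : R) :
    (-A).charpoly.reverse.eval t = (1 + t • A).det := by
  let b := Module.Free.chooseBasis R M
  rw [← LinearMap.charpoly_toMatrix (-A) b, Matrix.reverse_charpoly, Matrix.charpolyRev,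
    ← coe_evalRingHom, RingHom.map_det, ← LinearMap.det_toMatrix b]
  congr 1
  ext i j
  simp [Matrix.one_apply, apply_ite (eval t), LinearMap.toMatrix_one, mul_comm t]

end PolynomialFamilies

theorem inter_frontier_nonempty_of_isPreconnected {X : Type*} [TopologicalSpace X] {s t : Set X}
    (hs : IsPreconnected s) (hst : (s ∩ t).Nonempty) (hdiff : (s \ t).Nonempty) :
    (s ∩ frontier t).Nonempty := by
  by_contra! hempty
  have hinterior : ∀ x ∈ s, x ∈ closure t → x ∈ interior t := fun x hxs hxt => by
    by_contra hx
    exact (hempty ▸ (⟨hxs, hxt, hx⟩ : x ∈ s ∩ frontier t) : x ∈ (∅ : Set X))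
  have hsub : s ⊆ interior t := by
    refine hs.subset_of_closure_inter_subset isOpen_interior ?_ fun x hx =>
      hinterior x hx.2 (closure_mono interior_subset hx.1)
    obtain ⟨x, hxs, hxt⟩ := hst
    exact ⟨x, hxs, hinterior x hxs (subset_closure hxt)⟩
  obtain ⟨x, hxs, hxt⟩ := hdiff
  exact hxt (interior_subset (hsub hxs))

section LipschitzPerturbation

variable {V : Type*} [NormedAddCommGroup V] [NormedSpace ℝ V] {U : Set V} {g : V → V} {c : ℝ≥0}

theorem approximatesLinearOn_id_add (hg : LipschitzOnWith c g U) :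
    ApproximatesLinearOn (fun x => x + g x) (ContinuousLinearEquiv.refl ℝ V : V →L[ℝ] V) U c :=
  fun x hx y hy => by simpa [add_sub_add_comm] using hg.norm_sub_le hx hy

theorem subsingleton_or_lt_inv_nnnorm_refl (hc : c < 1) :
    Subsingleton V ∨ c < ‖((ContinuousLinearEquiv.refl ℝ V).symm : V →L[ℝ] V)‖₊⁻¹ := by
  rcases subsingleton_or_nontrivial V with hV | hV
  · exact .inl hV
  · exact .inr (by simpa using hc)

theorem injOn_id_add (hg : LipschitzOnWith c g U) (hc : c < 1) : InjOn (fun x => x + g x) U :=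
  (approximatesLinearOn_id_add hg).injOn (subsingleton_or_lt_inv_nnnorm_refl hc)

theorem isOpen_image_id_add [CompleteSpace V] (hU : IsOpen U) (hg : LipschitzOnWith c g U)
    (hc : c < 1) : IsOpen ((fun x => x + g x) '' U) :=
  (approximatesLinearOn_id_add hg).open_image
    (ContinuousLinearEquiv.refl ℝ V).toNonlinearRightInverse hU
    (subsingleton_or_lt_inv_nnnorm_refl hc)

theorem mapsTo_id_add (hg : LipschitzOnWith c g (closure U)) (hc : c < 1)
    (hzero : EqOn g 0 (frontier U)) : MapsTo (fun x => x + g x) U U := by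
  intro x hx
  by_contra hy
  obtain ⟨z, hz, hzU⟩ := inter_frontier_nonempty_of_isPreconnected
    (convex_segment x (x + g x)).isPreconnected ⟨x, left_mem_segment ℝ _ _, hx⟩
    ⟨_, right_mem_segment ℝ _ _, hy⟩
  have hxz : ‖x - z‖ ≤ ‖g x‖ := by
    simpa [norm_sub_rev x z] using norm_sub_le_of_mem_segment hz
  have hgx : ‖g x‖ ≤ c * ‖g x‖ :=
    calc ‖g x‖ = ‖g x - g z‖ := by rw [hzero hzU, Pi.zero_apply, sub_zero]
      _ ≤ c * ‖x - z‖ := hg.norm_sub_le (subset_closure hx) (frontier_subset_closure hzU)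
      _ ≤ c * ‖g x‖ := by gcongr
  have hgx0 : ‖g x‖ = 0 := by
    have : (c : ℝ) < 1 := hc
    nlinarith [norm_nonneg (g x)]
  exact hy (by simpa [norm_eq_zero.1 hgx0] using hx)

variable [FiniteDimensional ℝ V]

theorem image_id_add_eq (hconv : Convex ℝ U) (hopen : IsOpen U) (hbdd : Bornology.IsBounded U)
    (hg : LipschitzOnWith c g (closure U)) (hc : c < 1) (hzero : EqOn g 0 (frontier U)) :
    (fun x => x + g x) '' U = U := by
  have : CompleteSpace V := FiniteDimensional.complete ℝ V
  have : ProperSpace V := FiniteDimensional.proper ℝ V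
  set G : V → V := fun x => x + g x
  have hmaps : MapsTo G U U := mapsTo_id_add hg hc hzero
  refine hmaps.image_subset.antisymm ?_
  rcases U.eq_empty_or_nonempty with rfl | hne
  · exact empty_subset _
  have hclosed : IsClosed (G '' closure U) :=
    (hbdd.isCompact_closure.image_of_continuousOn
      (continuousOn_id.add hg.continuousOn)).isClosed
  refine hconv.isPreconnected.subset_of_closure_inter_subset
    (isOpen_image_id_add hopen (hg.mono subset_closure) hc) ?_ ?_
  · obtain ⟨x, hx⟩ := hne
    exact ⟨G x, hmaps hx, mem_image_of_mem G hx⟩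
  · rintro y ⟨hy, hyU⟩
    obtain ⟨x, hx, rfl⟩ := closure_minimal (image_mono subset_closure) hclosed hy
    by_cases hxU : x ∈ U
    · exact mem_image_of_mem G hxU
    · have hxF : x ∈ frontier U := hopen.frontier_eq ▸ ⟨hx, hxU⟩
      have hGx : G x = x := by simp [G, hzero hxF]
      exact absurd (hGx ▸ hyU) hxU

end LipschitzPerturbation

section Volume

variable {V : Type*} [NormedAddCommGroup V] [NormedSpace ℝ V] [FiniteDimensional ℝ V]

theorem det_one_add_pos_of_norm_lt_one {A : V →L[ℝ] V} (hA : ‖A‖ < 1) : 0 < (1 + A).det := by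
  have : CompleteSpace V := FiniteDimensional.complete ℝ V
  have hdet : ∀ s ∈ Icc (0 : ℝ) 1, (1 + s • A).det ≠ 0 := fun s hs => by
    have hsA : ‖-(s • A)‖ < 1 := by
      rw [norm_neg, norm_smul, Real.norm_of_nonneg hs.1]
      exact (mul_le_of_le_one_left (norm_nonneg A) hs.2).trans_lt hA
    have hunit : IsUnit (1 + s • A) := by simpa using isUnit_one_sub_of_norm_lt_one hsA
    exact ((hunit.map ContinuousLinearMap.toLinearMapRingHom).map LinearMap.det).ne_zero
  have hcont : Continuous fun s : ℝ => (1 + s • A).det :=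
    ContinuousLinearMap.continuous_det.comp (by fun_prop)
  by_contra! hneg
  obtain ⟨s, hs, hs0⟩ := intermediate_value_Icc' zero_le_one hcont.continuousOn
    (show (0 : ℝ) ∈ Icc _ _ from ⟨by simpa using hneg, by simp [ContinuousLinearMap.det]⟩)
  exact hdet s hs hs0

variable [MeasurableSpace V] [BorelSpace V] (μ : Measure V) [μ.IsAddHaarMeasure]
  {U : Set V} {g : V → V}

theorem setIntegral_det_one_add_fderiv_of_norm_fderiv_le (hconv : Convex ℝ U) (hopen : IsOpen U)
    (hbdd : Bornology.IsBounded U) (hg : Differentiable ℝ g) {c : ℝ≥0} (hc : c < 1)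
    (hbound : ∀ x ∈ closure U, ‖fderiv ℝ g x‖₊ ≤ c) (hzero : EqOn g 0 (frontier U)) :
    ∫ x in U, (1 + fderiv ℝ g x).det ∂μ = μ.real U := by
  have hlip : LipschitzOnWith c g (closure U) :=
    hconv.closure.lipschitzOnWith_of_nnnorm_fderiv_le (fun x _ => hg x) hbound
  have hderiv : ∀ x ∈ U, HasFDerivWithinAt (fun x => x + g x) (1 + fderiv ℝ g x) U x :=
    fun x _ => ((hasFDerivAt_id x).add (hg x).hasFDerivAt).hasFDerivWithinAt
  have hpos : ∀ x ∈ U, 0 < (1 + fderiv ℝ g x).det := fun x hx =>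
    det_one_add_pos_of_norm_lt_one ((hbound x (subset_closure hx)).trans_lt hc)
  calc ∫ x in U, (1 + fderiv ℝ g x).det ∂μ
      = ∫ x in U, |(1 + fderiv ℝ g x).det| • (1 : ℝ) ∂μ :=
        setIntegral_congr_fun hopen.measurableSet fun x hx => by simp [abs_of_pos (hpos x hx)]
    _ = ∫ _ in (fun x => x + g x) '' U, (1 : ℝ) ∂μ :=
        (integral_image_eq_integral_abs_det_fderiv_smul μ hopen.measurableSet hderiv
          (injOn_id_add (hlip.mono subset_closure) hc) fun _ => 1).symm
    _ = μ.real U := by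
        rw [image_id_add_eq hconv hopen hbdd hlip hc hzero, setIntegral_const, smul_eq_mul,
          mul_one]

theorem setIntegral_det_one_add_fderiv (hconv : Convex ℝ U) (hopen : IsOpen U)
    (hbdd : Bornology.IsBounded U) (hg : ContDiff ℝ 1 g) (hzero : EqOn g 0 (frontier U)) :
    ∫ x in U, (1 + fderiv ℝ g x).det ∂μ = μ.real U := by
  have : ProperSpace V := FiniteDimensional.proper ℝ V
  have hdiff : Differentiable ℝ g := hg.differentiable one_ne_zero
  have hcont : Continuous (fderiv ℝ g) := hg.continuous_fderiv one_ne_zero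
  have hint (t : ℝ) : Integrable (fun x => (1 + t • fderiv ℝ g x).det) (μ.restrict U) :=
    ((ContinuousLinearMap.continuous_det.comp (by fun_prop)).continuousOn.integrableOn_compact
      hbdd.isCompact_closure).mono_set subset_closure
  obtain ⟨q, hq⟩ : ∃ q : ℝ[X], ∀ t, q.eval t = ∫ x in U, (1 + t • fderiv ℝ g x).det ∂μ := by
    have heval (t : ℝ) (x : V) :
        (-(fderiv ℝ g x : V →ₗ[ℝ] V)).charpoly.reverse.eval t = (1 + t • fderiv ℝ g x).det :=
      eval_reverse_charpoly_neg _ t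
    simp only [← heval] at hint ⊢
    exact exists_polynomial_eval_eq_integral
      (fun x => (reverse_natDegree_le _).trans (LinearMap.charpoly_natDegree _).le) hint
  obtain ⟨K, hK⟩ : ∃ K : ℝ≥0, ∀ x ∈ closure U, ‖fderiv ℝ g x‖₊ ≤ K := by
    simpa [BddAbove, upperBounds, Set.Nonempty] using
      hbdd.isCompact_closure.bddAbove_image hcont.nnnorm.continuousOn
  have hsmall : ∀ᶠ t : ℝ in 𝓝 0, ‖t‖₊ * K < 1 :=
    Filter.Tendsto.eventually_lt_const zero_lt_one <|
      (by fun_prop : Continuous fun t : ℝ => ‖t‖₊ * K).tendsto' 0 0 (by simp)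
  have heq : ∀ᶠ t in 𝓝 0, q.eval t = μ.real U := hsmall.mono fun t ht => by
    have hfderiv (x : V) : fderiv ℝ (t • g) x = t • fderiv ℝ g x := fderiv_const_smul (hdiff x) t
    simp only [hq, ← hfderiv]
    refine setIntegral_det_one_add_fderiv_of_norm_fderiv_le μ hconv hopen hbdd
      (hdiff.const_smul t) ht (fun x hx => ?_) fun x hx => by simp [hzero hx]
    rw [hfderiv, nnnorm_smul]
    gcongr
    exact hK x hx
  have hqC : q = C (μ.real U) :=
    eq_of_infinite_eval_eq _ _ <| (infinite_of_mem_nhds 0 heq).mono fun t ht =>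
      ht.trans eval_C.symm
  simpa [hqC] using (hq 1).symm

theorem exists_contDiff_dist_lt_forall_mem_ne_zero {f : V → V} (hf : Continuous f) {s : Set V}
    (hs : μ s = 0) {ε : ℝ} (hε : 0 < ε) :
    ∃ g : V → V, ContDiff ℝ 1 g ∧ (∀ x, dist (g x) (f x) < ε) ∧ ∀ x ∈ s, g x ≠ 0 := by
  obtain ⟨g, hg, hgf, -⟩ := hf.exists_contDiff_approx 1 continuous_const fun _ => half_pos hε
  have hnull : μ (g '' s) = 0 :=
    addHaar_image_eq_zero_of_differentiableOn_of_addHaar_eq_zero μ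
      (hg.differentiable one_ne_zero).differentiableOn hs
  obtain ⟨c, hc, hcg⟩ : ∃ c ∈ ball (0 : V) (ε / 2), c ∉ g '' s := by
    by_contra! hsub
    exact (measure_ball_pos μ (0 : V) (half_pos hε)).ne' (measure_mono_null hsub hnull)
  refine ⟨fun x => g x - c, hg.sub contDiff_const, fun x => ?_, fun x hx h0 =>
    hcg ⟨x, hx, sub_eq_zero.1 h0⟩⟩
  calc dist (g x - c) (f x) ≤ dist (g x - c) (g x) + dist (g x) (f x) := dist_triangle _ _ _
    _ < ε / 2 + ε / 2 := add_lt_add (by simpa [dist_eq_norm] using hc) (hgf x)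
    _ = ε := add_halves ε

end Volume

section NoRetraction

variable {V : Type*} [NormedAddCommGroup V] [InnerProductSpace ℝ V] [FiniteDimensional ℝ V]

theorem det_fderiv_eq_zero_of_norm_eventually_eq {f : V → V} {x : V} {r : ℝ}
    (hf : DifferentiableAt ℝ f x) (hr : r ≠ 0) (hnorm : ∀ᶠ y in 𝓝 x, ‖f y‖ = r) :
    (fderiv ℝ f x).det = 0 := by
  by_contra hdet
  let e := (fderiv ℝ f x).toContinuousLinearEquivOfDetNeZero hdet
  have hconst : (fun y => inner ℝ (f y) (f y)) =ᶠ[𝓝 x] fun _ => r ^ 2 :=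
    hnorm.mono fun y hy => by simp only [real_inner_self_eq_norm_sq, hy]
  have horth (v : V) : inner ℝ (f x) (fderiv ℝ f x v) = 0 := by
    have h := fderiv_inner_apply ℝ hf hf v
    rw [hconst.fderiv_eq, fderiv_const_apply, real_inner_comm (f x)] at h
    simpa using h.symm
  have hself : inner ℝ (f x) (f x) = 0 := by
    have he : fderiv ℝ f x (e.symm (f x)) = f x := e.apply_symm_apply (f x)
    simpa only [he] using horth (e.symm (f x))
  exact hr (by rw [← hnorm.self_of_nhds, norm_eq_zero, ← inner_self_eq_zero (𝕜 := ℝ), hself])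

theorem not_eqOn_id_sphere_of_contDiff_of_norm_eq_one {f : V → V} (hf : ContDiff ℝ 1 f)
    (hnorm : ∀ x, ‖f x‖ = 1) : ¬EqOn f id (sphere 0 1) := by
  intro hid
  borelize V
  let μ : Measure V := volume
  have hdiff : Differentiable ℝ f := hf.differentiable one_ne_zero
  have hdet (x : V) : (1 + fderiv ℝ (f - id) x).det = 0 := by
    have hsub : fderiv ℝ (f - id) x = fderiv ℝ f x - 1 := by
      rw [fderiv_sub (hdiff x) differentiableAt_id, fderiv_id, ContinuousLinearMap.one_def]
    rw [hsub, add_sub_cancel]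
    exact det_fderiv_eq_zero_of_norm_eventually_eq (hdiff x) one_ne_zero (.of_forall hnorm)
  have hvol : ∫ x in ball (0 : V) 1, (1 + fderiv ℝ (f - id) x).det ∂μ = μ.real (ball 0 1) :=
    setIntegral_det_one_add_fderiv μ (convex_ball 0 1) isOpen_ball isBounded_ball
      (hf.sub contDiff_id) <| by
        rw [frontier_ball 0 one_ne_zero]
        exact fun x hx => sub_eq_zero.2 (hid hx)
  have hpos : 0 < μ.real (ball (0 : V) 1) :=
    ENNReal.toReal_pos (measure_ball_pos μ 0 one_pos).ne' measure_ball_lt_top.ne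
  simp only [hdet, integral_zero] at hvol
  exact hpos.ne hvol

theorem exists_eq_zero_of_eqOn_id_sphere {f : V → V} (hf : Continuous f)
    (hid : EqOn f id (sphere 0 1)) : ∃ x, f x = 0 := by
  by_contra! hne
  obtain ⟨g, hg, hgf, hsupp⟩ := (hf.sub continuous_id).exists_contDiff_approx 1 hf.norm
    fun x => norm_pos_iff.2 (hne x)
  have hne' (x : V) : x + g x ≠ 0 := fun h0 => by
    have hdist : dist (g x) (f x - x) = ‖f x‖ := by
      rw [← neg_eq_of_add_eq_zero_right h0, dist_eq_norm, ← norm_neg]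
      congr 1
      abel
    exact (hdist ▸ hgf x).false
  have hnorm : ContDiff ℝ 1 fun x => x + g x := contDiff_id.add hg
  refine not_eqOn_id_sphere_of_contDiff_of_norm_eq_one
    (((hnorm.norm ℝ hne').inv fun x => norm_ne_zero_iff.2 (hne' x)).smul hnorm)
    (fun x => norm_smul_inv_norm (𝕜 := ℝ) (hne' x)) fun x hx => ?_
  have hgx : g x = 0 := Function.notMem_support.1 fun hgx => hsupp hgx (sub_eq_zero.2 (hid hx))
  simp [hgx, mem_sphere_zero_iff_norm.1 hx]

theorem exists_eq_zero_of_dist_self_lt_one_on_sphere {f : V → V} (hf : Continuous f)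
    (hdist : ∀ x ∈ sphere (0 : V) 1, dist (f x) x < 1) : ∃ x, f x = 0 := by
  by_contra! hne
  have hdisj : Disjoint {x | ‖x‖ ≤ dist (f x) x} (sphere 0 1) :=
    disjoint_left.2 fun x hfar hx =>
      (hdist x hx).not_ge (mem_sphere_zero_iff_norm.1 hx ▸ hfar)
  obtain ⟨w, hw0, hw1, hw⟩ := exists_continuous_zero_one_of_isClosed
    (isClosed_le continuous_norm (hf.dist continuous_id)) isClosed_sphere hdisj
  obtain ⟨x, hx⟩ := exists_eq_zero_of_eqOn_id_sphere
    (f := fun x => x + (1 - w x) • (f x - x)) (by fun_prop) fun x hx => by simp [hw1 hx]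
  rcases le_or_gt ‖x‖ (dist (f x) x) with hfar | hnear
  · exact hne x (by simpa [hw0 hfar] using hx)
  · have hle : ‖x‖ ≤ dist (f x) x :=
      calc ‖x‖ = ‖(1 - w x) • (f x - x)‖ := by
            rw [← norm_neg, neg_eq_of_add_eq_zero_right hx]
        _ = (1 - w x) * dist (f x) x := by
            rw [norm_smul, Real.norm_of_nonneg (sub_nonneg.2 (hw x).2), dist_eq_norm]
        _ ≤ dist (f x) x := mul_le_of_le_one_left dist_nonneg (sub_le_self 1 (hw x).1)
    exact hle.not_gt hnear

end NoRetraction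

section Spheres

universe u w

theorem tietzeExtension_compl_singleton_sphere {V : Type w} [NormedAddCommGroup V]
    [InnerProductSpace ℝ V] [FiniteDimensional ℝ V] (v : sphere (0 : V) 1) :
    TietzeExtension.{u} ({v}ᶜ : Set (sphere (0 : V) 1)) :=
  have : TietzeExtension.{u} (ℝ ∙ (v : V))ᗮ := .of_tvs ℝ
  let φ := stereographic (norm_eq_of_mem_sphere v)
  .of_homeo (φ.toHomeomorphSourceTarget.trans
    ((Homeomorph.setCongr (stereographic_target _)).trans (Homeomorph.Set.univ _)))

theorem surjective_of_continuous_of_injective_sphere {V : Type*} [NormedAddCommGroup V]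
    [InnerProductSpace ℝ V] [FiniteDimensional ℝ V] {f : sphere (0 : V) 1 → sphere (0 : V) 1}
    (hf : Continuous f) (hinj : f.Injective) : f.Surjective := by
  intro v
  by_contra! hv
  have := tietzeExtension_compl_singleton_sphere v
  borelize V
  obtain ⟨F, -, hF⟩ :=
    ContinuousMap.exists_forall_mem_restrict_eq (t := {v}ᶜ) isClosed_sphere ⟨f, hf⟩ hv
  have hemb : IsClosedEmbedding fun x => (f x : V) :=
    (continuous_subtype_val.comp hf).isClosedEmbedding (Subtype.val_injective.comp hinj)
  obtain ⟨g, hg⟩ := ContinuousMap.exists_extension' hemb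
    (⟨Subtype.val, continuous_subtype_val⟩ : C(sphere (0 : V) 1, V))
  obtain ⟨Q, hQ, hQg, hQ0⟩ := exists_contDiff_dist_lt_forall_mem_ne_zero volume g.continuous
    (Measure.addHaar_sphere_of_ne_zero volume 0 one_ne_zero) one_pos
  obtain ⟨x, hx⟩ := exists_eq_zero_of_dist_self_lt_one_on_sphere
    (f := fun x => Q (F x)) (by fun_prop) fun x hx => by
      have hFx : F x = f ⟨x, hx⟩ := DFunLike.congr_fun hF ⟨x, hx⟩
      have hgx : g (f ⟨x, hx⟩) = x := congrFun hg ⟨x, hx⟩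
      simpa [hFx, hgx] using hQg (f ⟨x, hx⟩)
  exact hQ0 (F x) (F x).2 hx

theorem nonempty_unitSphere_homeomorph {E F : Type*} [NormedAddCommGroup E] [NormedSpace ℝ E]
    [NormedAddCommGroup F] [NormedSpace ℝ F] (e : E ≃L[ℝ] F) :
    Nonempty (sphere (0 : E) 1 ≃ₜ sphere (0 : F) 1) := by
  obtain ⟨h, -, -, hh⟩ := exists_homeomorph_image_interior_closure_frontier_eq_unitBall
    (s := e '' ball 0 1) ((convex_ball 0 1).linear_image (e : E →ₗ[ℝ] F))
    ((e.isOpenMap _ isOpen_ball).interior_eq.symm ▸ (nonempty_ball.2 one_pos).image e)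
    (e.lipschitz.isBounded_image isBounded_ball)
  have himage : (e.toHomeomorph.trans h) '' sphere 0 1 = sphere 0 1 := by
    rw [← hh, ← frontier_ball (0 : E) one_ne_zero]
    exact (image_image h e _).symm.trans (congrArg (h '' ·) (e.toHomeomorph.image_frontier _))
  exact ⟨((e.toHomeomorph.trans h).image _).trans (Homeomorph.setCongr himage)⟩

end Spheres

/-- invariance of domain consequence: for `k ≥ 1`, any continuous injective
map between the unit spheres of two `k`-dimensional real normed vector spaces is
surjective. -/
theorem stmt_12 (k : ℕ) (hk : 1 ≤ k)
    {E Y : Type*} [NormedAddCommGroup E] [NormedSpace ℝ E]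
    [NormedAddCommGroup Y] [NormedSpace ℝ Y]
    (hE : Module.finrank ℝ E = k) (hY : Module.finrank ℝ Y = k)
    (f : E → Y)
    (hmaps : Set.MapsTo f (Metric.sphere (0 : E) 1) (Metric.sphere (0 : Y) 1))
    (hcont : ContinuousOn f (Metric.sphere (0 : E) 1))
    (hinj : Set.InjOn f (Metric.sphere (0 : E) 1)) :
    Set.SurjOn f (Metric.sphere (0 : E) 1) (Metric.sphere (0 : Y) 1) := by
  have : FiniteDimensional ℝ E := .of_finrank_pos (by omega)
  have : FiniteDimensional ℝ Y := .of_finrank_pos (by omega)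
  let V := EuclideanSpace ℝ (Fin k)
  obtain ⟨φ⟩ := nonempty_unitSphere_homeomorph
    (ContinuousLinearEquiv.ofFinrankEq (by simp [V, hE]) : V ≃L[ℝ] E)
  obtain ⟨ψ⟩ := nonempty_unitSphere_homeomorph
    (ContinuousLinearEquiv.ofFinrankEq (by simp [V, hY]) : Y ≃L[ℝ] V)
  rw [← hmaps.restrict_surjective_iff, ← Function.Surjective.of_comp_iff' ψ.bijective,
    ← Function.Surjective.of_comp_iff _ φ.surjective]
  exact surjective_of_continuous_of_injective_sphere
    ((ψ.continuous.comp (hcont.mapsToRestrict hmaps)).comp φ.continuous)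
    ((ψ.injective.comp (hmaps.restrict_inj.2 hinj)).comp φ.injective)
end

section
/- Let k ∈ ℕ and let F : S_{ℓ∞^k} → S_{ℓ1^k} be an injective continuous map that does not increase support size. Then there exists a permutation π of {1,…,k} such that F ∘ P_π is support preserving. In particular, such an F preserves support size: |supp(F(x))| = |supp(x)| for all x ∈ S_{ℓ∞^k}. -/
/-!
The unit sphere of the supremum norm is decomposed into relatively open cells, one for each sign
pattern. On a cell where the support of `F` has constant size, the sign pattern of `F` is constant,
because a nonzero coordinate cannot change sign under a small perturbation.

By injectivity, `F` permutes the vectors `± eᵢ`, since these are the points of support size one. If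
`F eᵢ = -F eⱼ` with `i ≠ j`, then some coordinate of `F` has opposite signs at two points of the
closure of the cell of `eᵢ + eⱼ`, on which `F` has support size two; hence `F` takes antipodal
vectors `± eᵢ` to antipodal ones, and after permuting and reflecting coordinates in the target one
may assume that `F` fixes all of them. Then `F` preserves all sign patterns, by induction on the
size of the support: if `F x` had smaller support than `x`, then it would lie on a face of the
cross-polytope which `F` already covers from the corresponding face of the cube, contradicting
injectivity, so the support size is constant on the cell of `x`, and the signs of `F` there can be
read off at the vectors `± eᵢ` in its closure.

That `F` covers the face follows from the Poincaré–Miranda theorem, which is proved by subdividing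
the cube and computing a cup product of mod 2 coboundaries.
-/

section CupProduct

variable {ι : Type*} [DecidableEq ι]

/-- The cup product `δf₁ ⌣ ⋯ ⌣ δfₘ` of the coboundaries of a list of mod 2 cochains on the lattice
`ι → ℕ`, evaluated on the unit cube with lower corner `x` and set of directions `D`. It is the sum,
over the monotone edge paths from `x` to the opposite corner, of the products of the increments of
`f₁, …, fₘ` along the successive edges; it is meant for `D.card = m`. -/
def cupCoboundary : List ((ι → ℕ) → ZMod 2) → Finset ι → (ι → ℕ) → ZMod 2
  | [], _, _ => 1
  | f :: fs, D, x =>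
    ∑ i ∈ D, (f (x + Pi.single i 1) - f x) * cupCoboundary fs (D.erase i) (x + Pi.single i 1)

lemma sum_erase_comm {M : Type*} [AddCommMonoid M] (D : Finset ι) (h : ι → ι → M) :
    ∑ i ∈ D, ∑ j ∈ D.erase i, h i j = ∑ i ∈ D, ∑ j ∈ D.erase i, h j i := by
  refine Finset.sum_comm' fun i j => ?_
  simp only [Finset.mem_erase]
  tauto

lemma sum_erase_eq_zero_of_symm {R : Type*} [Semiring R] [CharP R 2] (D : Finset ι)
    (h : ι → ι → R) (hsymm : ∀ i j, h i j = h j i) : ∑ i ∈ D, ∑ j ∈ D.erase i, h i j = 0 := by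
  induction D using Finset.induction_on with
  | empty => simp
  | insert a s ha ih =>
    have hinner : ∀ i ∈ s, ∑ j ∈ (insert a s).erase i, h i j = h a i + ∑ j ∈ s.erase i, h i j := by
      intro i hi
      have hai : a ≠ i := fun hai => ha (hai ▸ hi)
      rw [Finset.erase_insert_of_ne hai, Finset.sum_insert (by simp [ha]), hsymm a i]
    rw [Finset.sum_insert ha, Finset.erase_insert ha, Finset.sum_congr rfl hinner,
      Finset.sum_add_distrib, ih, add_zero, CharTwo.add_self_eq_zero]

/-- Opposite faces of a cube cancel because `δ(δf₁ ⌣ ⋯ ⌣ δfₘ) = 0`. -/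
lemma sum_cupCoboundary_add_single (fs : List ((ι → ℕ) → ZMod 2)) (D : Finset ι) (x : ι → ℕ)
    (hD : D.card = fs.length + 1) :
    ∑ i ∈ D, cupCoboundary fs (D.erase i) (x + Pi.single i 1) =
      ∑ i ∈ D, cupCoboundary fs (D.erase i) x := by
  induction fs generalizing D x with
  | nil => simp [cupCoboundary]
  | cons f fs ih =>
    have hface (i : ι) (hi : i ∈ D) (y : ι → ℕ) :
        ∑ j ∈ D.erase i, cupCoboundary fs ((D.erase i).erase j) (y + Pi.single j 1) =
          ∑ j ∈ D.erase i, cupCoboundary fs ((D.erase i).erase j) y :=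
      ih _ y (by rw [Finset.card_erase_of_mem hi, hD, List.length_cons, Nat.add_sub_cancel])
    have hupper : ∑ i ∈ D, ∑ j ∈ D.erase i, f (x + Pi.single i 1 + Pi.single j 1) *
        cupCoboundary fs ((D.erase i).erase j) (x + Pi.single i 1 + Pi.single j 1) = 0 :=
      sum_erase_eq_zero_of_symm D _ fun i j => by rw [add_right_comm, Finset.erase_right_comm]
    have hlower : ∑ i ∈ D, ∑ j ∈ D.erase i,
        f x * cupCoboundary fs ((D.erase i).erase j) (x + Pi.single j 1) = 0 := by
      rw [← sum_erase_eq_zero_of_symm D (fun i j => f x * cupCoboundary fs ((D.erase i).erase j) x)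
        fun i j => by rw [Finset.erase_right_comm]]
      refine Finset.sum_congr rfl fun i hi => ?_
      rw [← Finset.mul_sum, ← Finset.mul_sum, hface i hi]
    have hmixed : ∑ i ∈ D, ∑ j ∈ D.erase i, f (x + Pi.single i 1) *
          cupCoboundary fs ((D.erase i).erase j) (x + Pi.single i 1 + Pi.single j 1) =
        ∑ i ∈ D, ∑ j ∈ D.erase i, f (x + Pi.single j 1) *
          cupCoboundary fs ((D.erase i).erase j) (x + Pi.single j 1) := by
      refine .trans ?_ (sum_erase_comm D fun i j =>
        f (x + Pi.single i 1) * cupCoboundary fs ((D.erase j).erase i) (x + Pi.single i 1))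
      refine Finset.sum_congr rfl fun i hi => ?_
      rw [← Finset.mul_sum, hface i hi, Finset.mul_sum]
      exact Finset.sum_congr rfl fun j _ => by rw [Finset.erase_right_comm]
    simp only [cupCoboundary, CharTwo.sub_eq_add, add_mul, Finset.sum_add_distrib]
    rw [hupper, hlower, hmixed, zero_add, add_zero]

/-- `δf₁ ⌣ δf₂ ⌣ ⋯ = δ(f₁ ⌣ δf₂ ⌣ ⋯)`. -/
lemma cupCoboundary_cons_eq_sum_sub (f : (ι → ℕ) → ZMod 2) (fs : List ((ι → ℕ) → ZMod 2))
    (D : Finset ι) (x : ι → ℕ) (hD : D.card = fs.length + 1) :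
    cupCoboundary (f :: fs) D x = ∑ i ∈ D,
      (f (x + Pi.single i 1) * cupCoboundary fs (D.erase i) (x + Pi.single i 1) -
        f x * cupCoboundary fs (D.erase i) x) := by
  simp only [cupCoboundary, sub_mul, Finset.sum_sub_distrib]
  rw [← Finset.mul_sum, ← Finset.mul_sum, sum_cupCoboundary_add_single fs D x hD]

lemma cupCoboundary_eq_zero_of_const {fs : List ((ι → ℕ) → ZMod 2)} {f : (ι → ℕ) → ZMod 2}
    (hf : f ∈ fs) {i : ι} {c : ℕ} {v : ZMod 2} (hv : ∀ y, y i = c → f y = v)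
    {D : Finset ι} (hi : i ∉ D) {x : ι → ℕ} (hx : x i = c) : cupCoboundary fs D x = 0 := by
  induction fs generalizing D x with
  | nil => simp at hf
  | cons g fs ih =>
    refine Finset.sum_eq_zero fun j hj => ?_
    have hij : i ≠ j := fun hij => hi (hij ▸ hj)
    have hstep : (x + Pi.single j 1 : ι → ℕ) i = c := by simp [hij, hx]
    rcases List.mem_cons.1 hf with rfl | hf
    · rw [hv _ hstep, hv _ hx, sub_self, zero_mul]
    · rw [ih hf (by simp [hi]) hstep, mul_zero]

lemma Icc_add_indicator_erase_subset {D : Finset ι} {j : ι} (hj : j ∈ D) (x : ι → ℕ) :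
    Set.Icc (x + Pi.single j 1) (x + Pi.single j 1 + Set.indicator (D.erase j) 1) ⊆
      Set.Icc x (x + Set.indicator D 1) := by
  refine Set.Icc_subset_Icc le_self_add (le_of_eq ?_)
  rw [add_assoc]
  congr 1
  funext l
  rcases eq_or_ne l j with rfl | hl
  · simp [hj]
  · simp [Set.indicator_apply, hl]

lemma exists_ne_of_cupCoboundary_ne_zero {fs : List ((ι → ℕ) → ZMod 2)} {D : Finset ι}
    {x : ι → ℕ} (hne : cupCoboundary fs D x ≠ 0) {f : (ι → ℕ) → ZMod 2} (hf : f ∈ fs) :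
    ∃ y ∈ Set.Icc x (x + Set.indicator D 1), ∃ z ∈ Set.Icc x (x + Set.indicator D 1),
      f y ≠ f z := by
  induction fs generalizing D x with
  | nil => simp at hf
  | cons g fs ih =>
    obtain ⟨j, hj, hterm⟩ := Finset.exists_ne_zero_of_sum_ne_zero hne
    have hsub := Icc_add_indicator_erase_subset hj x
    rcases List.mem_cons.1 hf with rfl | hf
    · exact ⟨x + Pi.single j 1, hsub ⟨le_rfl, le_self_add⟩, x, ⟨le_rfl, le_self_add⟩,
        sub_ne_zero.1 (left_ne_zero_of_mul hterm)⟩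
    · obtain ⟨y, hy, z, hz, hyz⟩ := ih (right_ne_zero_of_mul hterm) hf
      exact ⟨y, hsub hy, z, hsub hz, hyz⟩

variable [Fintype ι]

/-- The lower corners of the unit cubes with directions `D` that tile the face of `[0, N]^ι` on
which the coordinates outside `D` equal `N`. -/
def faceGrid (N : ℕ) (D : Finset ι) : Finset (ι → ℕ) :=
  Fintype.piFinset fun i => if i ∈ D then Finset.range N else {N}

lemma mem_faceGrid {N : ℕ} {D : Finset ι} {x : ι → ℕ} :
    x ∈ faceGrid N D ↔ ∀ i, if i ∈ D then x i < N else x i = N := by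
  rw [faceGrid, Fintype.mem_piFinset]
  refine forall_congr' fun i => ?_
  split_ifs <;> simp

lemma apply_eq_of_mem_faceGrid {N : ℕ} {D : Finset ι} {x : ι → ℕ} (hx : x ∈ faceGrid N D) {i : ι}
    (hi : i ∉ D) : x i = N := by
  simpa [hi] using mem_faceGrid.1 hx i

lemma sum_faceGrid_eq_sum_erase_range {M : Type*} [AddCommMonoid M] (N : ℕ) {D : Finset ι} {i : ι}
    (hi : i ∈ D) (g : (ι → ℕ) → M) :
    ∑ x ∈ faceGrid N D, g x =
      ∑ x ∈ faceGrid N (D.erase i), ∑ n ∈ Finset.range N, g (Function.update x i n) := by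
  rw [← Finset.sum_product' (f := fun x n => g (Function.update x i n))]
  refine Finset.sum_bij' (fun x _ => (Function.update x i N, x i))
    (fun q _ => Function.update q.1 i q.2) ?_ ?_ ?_ ?_ ?_
  · simp only [Finset.mem_product, mem_faceGrid, Finset.mem_range, Finset.mem_erase,
      Function.update_apply]
    grind
  · simp only [Finset.mem_product, mem_faceGrid, Finset.mem_range, Finset.mem_erase,
      Function.update_apply]
    grind
  · simp
  · rintro ⟨x, n⟩ hq
    have hxi : x i = N := apply_eq_of_mem_faceGrid (Finset.mem_product.1 hq).1 (by simp)
    simp [← hxi]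
  · simp

lemma sum_faceGrid_sub {M : Type*} [AddCommGroup M] (N : ℕ) {D : Finset ι} {i : ι} (hi : i ∈ D)
    (g : (ι → ℕ) → M) :
    ∑ x ∈ faceGrid N D, (g (x + Pi.single i 1) - g x) =
      ∑ x ∈ faceGrid N (D.erase i), (g x - g (Function.update x i 0)) := by
  rw [sum_faceGrid_eq_sum_erase_range N hi]
  refine Finset.sum_congr rfl fun x hx => ?_
  have hxi : x i = N := apply_eq_of_mem_faceGrid hx (by simp)
  have hstep (n : ℕ) :
      Function.update x i n + Pi.single i 1 = Function.update x i (n + 1) := by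
    funext j
    rcases eq_or_ne j i with rfl | hj <;> simp [*]
  simp only [hstep]
  rw [Finset.sum_range_sub fun n => g (Function.update x i n), ← hxi, Function.update_eq_self]

/-- By Stokes' formula the sum localises to the two faces orthogonal to the direction of the first
function, the others contributing nothing because the remaining coboundaries vanish there. -/
lemma sum_cupCoboundary_eq_one {N : ℕ} {f : ι → (ι → ℕ) → ZMod 2}
    (hzero : ∀ i x, x i = 0 → f i x = 0) (hone : ∀ i x, x i = N → f i x = 1)
    {L : List ι} (hL : L.Nodup) :
    ∑ x ∈ faceGrid N L.toFinset, cupCoboundary (L.map f) L.toFinset x = 1 := by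
  induction L with
  | nil =>
    have hgrid : faceGrid N (∅ : Finset ι) = {fun _ => N} := by
      ext x; simp [mem_faceGrid, funext_iff]
    simp [hgrid, cupCoboundary]
  | cons a L ih =>
    obtain ⟨haL, hL'⟩ := List.nodup_cons.1 hL
    set D := (a :: L).toFinset with hD
    have hcard : D.card = (L.map f).length + 1 := by
      rw [hD, List.toFinset_card_of_nodup hL]; simp
    have ha : a ∈ D := by simp [hD]
    have herase : D.erase a = L.toFinset := by
      rw [hD, List.toFinset_cons, Finset.erase_insert (by simpa using haL)]
    rw [List.map_cons, Finset.sum_congr rfl fun x _ => cupCoboundary_cons_eq_sum_sub _ _ D x hcard,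
      Finset.sum_comm, Finset.sum_congr rfl fun i hi => sum_faceGrid_sub N hi
        fun x => f a x * cupCoboundary (L.map f) (D.erase i) x, Finset.sum_eq_single_of_mem a ha]
    · rw [herase, ← ih hL']
      refine Finset.sum_congr rfl fun x hx => ?_
      rw [hone a x (apply_eq_of_mem_faceGrid hx (by simpa using haL)), hzero a _ (by simp),
        one_mul, zero_mul, sub_zero]
    · intro i hi hia
      have hfi : f i ∈ L.map f := List.mem_map_of_mem (by simpa [hD, hia] using hi)
      refine Finset.sum_eq_zero fun x hx => ?_
      rw [cupCoboundary_eq_zero_of_const hfi (hone i) (by simp)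
          (apply_eq_of_mem_faceGrid hx (by simp)),
        cupCoboundary_eq_zero_of_const hfi (hzero i) (by simp) (by simp), mul_zero, mul_zero,
        sub_zero]

end CupProduct

section PoincareMiranda

variable {ι : Type*}

theorem exists_cube_of_separating_faces [Finite ι] {N : ℕ} (A : ι → Set (ι → ℕ))
    (hzero : ∀ i x, x i = 0 → x ∉ A i) (hN : ∀ i x, x i = N → x ∈ A i) :
    ∃ x : ι → ℕ, (∀ i, x i < N) ∧
      ∀ i, (∃ y ∈ Set.Icc x (x + 1), y ∈ A i) ∧ ∃ z ∈ Set.Icc x (x + 1), z ∉ A i := by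
  classical
  have := Fintype.ofFinite ι
  let f (i : ι) : (ι → ℕ) → ZMod 2 := (A i).indicator 1
  have hsum := sum_cupCoboundary_eq_one (N := N) (f := f) (fun i x hx => by simp [f, hzero i x hx])
    (fun i x hx => by simp [f, hN i x hx]) (Finset.nodup_toList Finset.univ)
  rw [Finset.toList_toFinset] at hsum
  obtain ⟨x, hx, hne⟩ := Finset.exists_ne_zero_of_sum_ne_zero (hsum.trans_ne one_ne_zero)
  refine ⟨x, fun i => by simpa using mem_faceGrid.1 hx i, fun i => ?_⟩
  obtain ⟨y, hy, z, hz, hyz⟩ :=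
    exists_ne_of_cupCoboundary_ne_zero hne (List.mem_map_of_mem (f := f) (a := i) (by simp))
  simp only [Finset.coe_univ, Set.indicator_univ] at hy hz
  by_cases hyA : y ∈ A i <;> by_cases hzA : z ∈ A i
  · simp [f, hyA, hzA] at hyz
  · exact ⟨⟨y, hy, hyA⟩, z, hz, hzA⟩
  · exact ⟨⟨z, hz, hzA⟩, y, hy, hyA⟩
  · simp [f, hyA, hzA] at hyz

lemma exists_dist_le_of_faces [Fintype ι] {g : (ι → ℝ) → ι → ℝ}
    (hzero : ∀ x ∈ Set.Icc 0 1, ∀ i, x i = 0 → g x i ≤ 0)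
    (hone : ∀ x ∈ Set.Icc 0 1, ∀ i, x i = 1 → 0 ≤ g x i) (n : ℕ) :
    ∃ x ∈ Set.Icc (0 : ι → ℝ) 1, ∀ i,
      (∃ y ∈ Set.Icc 0 1, dist y x ≤ 1 / (n + 1 : ℝ) ∧ 0 ≤ g y i) ∧
        ∃ z ∈ Set.Icc 0 1, dist z x ≤ 1 / (n + 1 : ℝ) ∧ g z i ≤ 0 := by
  have hn : (0 : ℝ) < n + 1 := by positivity
  let s (x : ι → ℕ) (i : ι) : ℝ := x i / (n + 1)
  let A (i : ι) : Set (ι → ℕ) := {x | x i = n + 1 ∨ x i ≠ 0 ∧ 0 ≤ g (s x) i}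
  obtain ⟨x, hx, hyz⟩ := exists_cube_of_separating_faces (N := n + 1) A
    (fun i x hx => by simp [A, hx]) (fun i x hx => by simp [A, hx])
  have hmem {y : ι → ℕ} (hy : y ∈ Set.Icc x (x + 1)) : s y ∈ Set.Icc (0 : ι → ℝ) 1 := by
    refine ⟨fun i => by simp only [s, Pi.zero_apply]; positivity, fun i => ?_⟩
    exact (div_le_one hn).2 (by exact_mod_cast (hy.2 i).trans (hx i))
  have hdist {y : ι → ℕ} (hy : y ∈ Set.Icc x (x + 1)) : dist (s y) (s x) ≤ 1 / (n + 1 : ℝ) := by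
    refine (dist_pi_le_iff (by positivity)).2 fun j => ?_
    have hlower : (x j : ℝ) ≤ y j := by exact_mod_cast hy.1 j
    have hupper : (y j : ℝ) ≤ x j + 1 := by exact_mod_cast hy.2 j
    rw [Real.dist_eq, ← sub_div, abs_div, abs_of_pos hn, abs_of_nonneg (sub_nonneg.2 hlower)]
    gcongr
    linarith
  have hx : x ∈ Set.Icc x (x + 1) := ⟨le_rfl, le_self_add⟩
  refine ⟨s x, hmem hx, fun i => ?_⟩
  obtain ⟨⟨y, hy, hyA⟩, z, hz, hzA⟩ := hyz i
  refine ⟨⟨s y, hmem hy, hdist hy, ?_⟩, s z, hmem hz, hdist hz, ?_⟩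
  · rcases hyA with hyN | ⟨-, hgy⟩
    · exact hone _ (hmem hy) i (by simp only [s, hyN]; push_cast; exact div_self hn.ne')
    · exact hgy
  · by_cases hz0 : z i = 0
    · exact hzero _ (hmem hz) i (by simp [s, hz0])
    · exact le_of_not_ge fun hgz => hzA (.inr ⟨hz0, hgz⟩)

lemma exists_forall_abs_lt_of_faces [Finite ι] {g : (ι → ℝ) → ι → ℝ}
    (hg : ContinuousOn g (Set.Icc 0 1))
    (hzero : ∀ x ∈ Set.Icc 0 1, ∀ i, x i = 0 → g x i ≤ 0)
    (hone : ∀ x ∈ Set.Icc 0 1, ∀ i, x i = 1 → 0 ≤ g x i) {ε : ℝ} (hε : 0 < ε) :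
    ∃ x ∈ Set.Icc 0 1, ∀ i, |g x i| < ε := by
  have := Fintype.ofFinite ι
  obtain ⟨δ, hδ, hunif⟩ := Metric.uniformContinuousOn_iff.1
    (isCompact_Icc.uniformContinuousOn_of_continuous hg) ε hε
  obtain ⟨n, hn⟩ := exists_nat_one_div_lt hδ
  obtain ⟨x, hx, hyz⟩ := exists_dist_le_of_faces hzero hone n
  have hclose {y : ι → ℝ} (hy : y ∈ Set.Icc 0 1) (hyx : dist y x ≤ 1 / (n + 1 : ℝ)) (i : ι) :
      |g y i - g x i| < ε :=
    (dist_le_pi_dist (g y) (g x) i).trans_lt (hunif y hy x hx (hyx.trans_lt hn))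
  refine ⟨x, hx, fun i => ?_⟩
  obtain ⟨⟨y, hy, hyx, hgy⟩, z, hz, hzx, hgz⟩ := hyz i
  have hxy := abs_lt.1 (hclose hy hyx i)
  have hxz := abs_lt.1 (hclose hz hzx i)
  exact abs_lt.2 ⟨by linarith, by linarith⟩

theorem poincare_miranda [Finite ι] {g : (ι → ℝ) → ι → ℝ} (hg : ContinuousOn g (Set.Icc 0 1))
    (hzero : ∀ x ∈ Set.Icc 0 1, ∀ i, x i = 0 → g x i ≤ 0)
    (hone : ∀ x ∈ Set.Icc 0 1, ∀ i, x i = 1 → 0 ≤ g x i) :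
    ∃ x ∈ Set.Icc 0 1, g x = 0 := by
  have := Fintype.ofFinite ι
  obtain ⟨m, hm, hmin⟩ := isCompact_Icc.exists_isMinOn ⟨(0 : ι → ℝ), by simp⟩ hg.norm
  refine ⟨m, hm, by_contra fun hne => ?_⟩
  have hpos : 0 < ‖g m‖ := norm_pos_iff.2 hne
  obtain ⟨x, hx, hlt⟩ := exists_forall_abs_lt_of_faces hg hzero hone hpos
  exact (hmin hx).not_gt ((pi_norm_lt_iff hpos).2 hlt)

lemma exists_complementarity [Finite ι] {h : (ι → ℝ) → ι → ℝ}
    (hh : ContinuousOn h (Set.Icc 0 1)) :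
    ∃ u ∈ Set.Icc 0 1, ∀ i, (0 < u i → h u i ≤ 0) ∧ (u i < 1 → 0 ≤ h u i) := by
  let g (u : ι → ℝ) (i : ι) : ℝ := max (min (h u i) (u i)) (u i - 1)
  have hg : ContinuousOn g (Set.Icc 0 1) := continuousOn_pi.2 fun i => by
    have hi : ContinuousOn (fun u : ι → ℝ => u i) (Set.Icc 0 1) :=
      (continuous_apply i).continuousOn
    exact ((continuousOn_pi.1 hh i).inf hi).sup (hi.sub continuousOn_const)
  obtain ⟨u, hu, hzero⟩ := poincare_miranda hg
    (fun u _ i hui => max_le ((min_le_right _ _).trans hui.le) (by linarith))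
    (fun u _ i hui => le_max_of_le_right (by linarith))
  refine ⟨u, hu, fun i => ⟨fun hui => ?_, fun hui => ?_⟩⟩
  · have hmin : min (h u i) (u i) ≤ 0 := (le_max_left _ _).trans_eq (congrFun hzero i)
    exact (min_le_iff.1 hmin).resolve_right hui.not_ge
  · have hmax : 0 ≤ g u i := (congrFun hzero i).ge
    exact (le_min_iff.1 ((le_max_iff.1 hmax).resolve_right (by linarith))).1

end PoincareMiranda

section OpenCells

open Set Function Metric Filter Topology

/-- The vector of signs of the coordinates of `x`; its level sets in the unit sphere of the
supremum norm are the relatively open faces of the cube. -/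
noncomputable def signPattern {ι : Type*} (x : ι → ℝ) : ι → SignType := fun i => SignType.sign (x i)

lemma support_signPattern {ι : Type*} (x : ι → ℝ) : support (signPattern x) = support x := by
  ext i
  exact sign_ne_zero

lemma signPattern_eq_zero_iff {ι : Type*} {x : ι → ℝ} : signPattern x = 0 ↔ x = 0 := by
  simp [funext_iff, signPattern, sign_eq_zero_iff]

lemma signPattern_smul_of_pos {ι : Type*} {c : ℝ} (hc : 0 < c) (x : ι → ℝ) :
    signPattern (c • x) = signPattern x := by
  funext i
  simp [signPattern, sign_mul, sign_pos hc]

lemma convex_setOf_sign_eq (σ : SignType) : Convex ℝ {r : ℝ | SignType.sign r = σ} :=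
  (ordConnected_singleton.preimage_mono SignType.sign.monotone).convex

lemma convex_setOf_signPattern_eq {ι : Type*} (σ : ι → SignType) :
    Convex ℝ {x : ι → ℝ | signPattern x = σ} := by
  have hpi : {x : ι → ℝ | signPattern x = σ} = univ.pi fun i => {r | SignType.sign r = σ i} := by
    ext x
    simp [signPattern, funext_iff]
  rw [hpi]
  exact convex_pi fun i _ => convex_setOf_sign_eq (σ i)

variable {X ι κ : Type*} [TopologicalSpace X]

lemma eventually_sign_eq [Finite κ] {f : X → κ → ℝ} {s : Set X} {a : X}
    (hf : ContinuousWithinAt f s a) :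
    ∀ᶠ z in 𝓝[s] a, ∀ i, f a i ≠ 0 → SignType.sign (f z i) = SignType.sign (f a i) := by
  refine eventually_all.2 fun i => eventually_imp_distrib_left.2 fun hi => ?_
  have hsign : ContinuousWithinAt (fun z => SignType.sign (f z i)) s a :=
    (continuousAt_sign_of_ne_zero hi).comp_continuousWithinAt (f := fun z => f z i)
      (continuousWithinAt_pi.1 hf i)
  simpa [ContinuousWithinAt, nhds_discrete] using hsign

lemma continuousOn_signPattern [Finite κ] {f : X → κ → ℝ} {s : Set X} (hf : ContinuousOn f s)
    {m : ℕ} (hm : ∀ x ∈ s, (support (f x)).ncard = m) :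
    ContinuousOn (fun x => signPattern (f x)) s := by
  intro x hx
  refine tendsto_nhds_of_eventually_eq ?_
  filter_upwards [eventually_sign_eq (hf x hx), self_mem_nhdsWithin] with z hz hzs
  have hsub : support (f x) ⊆ support (f z) := fun i hi => by
    rw [mem_support, ← sign_ne_zero, hz i hi]
    exact sign_ne_zero.2 hi
  have heq := eq_of_subset_of_ncard_le hsub ((hm z hzs).trans (hm x hx).symm).le
  funext i
  by_cases hi : f x i = 0
  · have hzi : f z i = 0 := notMem_support.1 fun hzi => (heq ▸ hzi : i ∈ support (f x)) hi
    simp [signPattern, hi, hzi]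
  · exact hz i hi

lemma sign_eq_of_mem_closure [Finite κ] {f : X → κ → ℝ} {s c : Set X} (hf : ContinuousOn f s)
    (hcs : c ⊆ s) (hc : IsPreconnected c) {m : ℕ} (hm : ∀ z ∈ c, (support (f z)).ncard = m)
    {x y : X} (hx : x ∈ c) (hys : y ∈ s) (hy : y ∈ closure c) {i : κ} (hi : f y i ≠ 0) :
    SignType.sign (f y i) = SignType.sign (f x i) := by
  have := mem_closure_iff_nhdsWithin_neBot.1 hy
  obtain ⟨z, hz, hzc⟩ :=
    ((eventually_sign_eq ((hf y hys).mono hcs)).and self_mem_nhdsWithin).exists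
  have hzx := hc.constant (continuousOn_signPattern (hf.mono hcs) hm) hzc hx
  exact (hz i hi).symm.trans (congrFun hzx i)

variable [Fintype ι]

/-- The relatively open face with sign pattern `σ` of the unit sphere of the supremum norm. -/
def openCell (σ : ι → SignType) : Set (ι → ℝ) := {x ∈ sphere 0 1 | signPattern x = σ}

lemma support_eq_of_mem_openCell {x z : ι → ℝ} (hz : z ∈ openCell (signPattern x)) :
    support z = support x := by
  rw [← support_signPattern, hz.2, support_signPattern]

lemma normalize_mem_openCell {x : ι → ℝ} (hx : x ≠ 0) :
    NormedSpace.normalize x ∈ openCell (signPattern x) :=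
  ⟨by simpa using hx, signPattern_smul_of_pos (by simpa using hx) x⟩

lemma isPreconnected_openCell (σ : ι → SignType) : IsPreconnected (openCell σ) := by
  rcases eq_or_ne σ 0 with rfl | hσ
  · have hempty : openCell (0 : ι → SignType) = ∅ := by
      refine eq_empty_of_forall_notMem fun x hx => ?_
      simpa [signPattern_eq_zero_iff.1 hx.2] using hx.1
    rw [hempty]
    exact isPreconnected_empty
  have hne {x : ι → ℝ} (hx : signPattern x = σ) : x ≠ 0 := by
    rwa [← hx, Ne, signPattern_eq_zero_iff] at hσ
  have himage : openCell σ = NormedSpace.normalize '' {x | signPattern x = σ} := by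
    refine Subset.antisymm (fun x hx => ⟨x, hx.2, ?_⟩) ?_
    · exact NormedSpace.normalize_eq_self_of_norm_eq_one (mem_sphere_zero_iff_norm.1 hx.1)
    · rintro _ ⟨x, rfl, rfl⟩
      exact normalize_mem_openCell (hne rfl)
  rw [himage]
  exact (convex_setOf_signPattern_eq σ).isPreconnected.image _
    ((continuousOn_id.norm.inv₀ fun x hx => norm_ne_zero_iff.2 (hne hx)).smul continuousOn_id)

lemma mem_closure_openCell {x y : ι → ℝ} (hx : x ≠ 0) (hy : y ∈ sphere 0 1)
    (hxy : ∀ i, y i ≠ 0 → SignType.sign (y i) = SignType.sign (x i)) :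
    y ∈ closure (openCell (signPattern x)) := by
  let w (t : ℝ) : ι → ℝ := NormedSpace.normalize (AffineMap.lineMap y x t)
  have hw : ∀ t ∈ Ioo (0 : ℝ) 1, w t ∈ openCell (signPattern x) := by
    intro t ht
    have hpattern : signPattern (AffineMap.lineMap y x t : ι → ℝ) = signPattern x := by
      funext i
      rw [signPattern, AffineMap.pi_lineMap_apply]
      by_cases hyi : y i = 0
      · simp [hyi, AffineMap.lineMap_apply, signPattern, sign_mul, sign_pos ht.1]
      · exact (convex_setOf_sign_eq _).lineMap_mem (hxy i hyi) rfl ⟨ht.1.le, ht.2.le⟩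
    rw [← hpattern]
    refine normalize_mem_openCell ?_
    rwa [Ne, ← signPattern_eq_zero_iff, hpattern, signPattern_eq_zero_iff]
  have hlim : Tendsto w (𝓝[>] 0) (𝓝 y) := by
    have hy1 : ‖y‖ = 1 := mem_sphere_zero_iff_norm.1 hy
    have hline : Tendsto (AffineMap.lineMap y x : ℝ → ι → ℝ) (𝓝 0) (𝓝 y) := by
      simpa using (AffineMap.lineMap_continuous (p := y) (q := x) (R := ℝ)).tendsto 0
    have hnormalize := (hline.norm.inv₀ (by simp [hy1])).smul hline
    rw [hy1, inv_one, one_smul] at hnormalize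
    exact hnormalize.mono_left nhdsWithin_le_nhds
  exact mem_closure_of_tendsto hlim (mem_of_superset (Ioo_mem_nhdsGT one_pos) hw)

end OpenCells

section Surjectivity

open Set Function Metric

variable {ι : Type*} [Fintype ι]

lemma apply_le_norm (x : ι → ℝ) (i : ι) : x i ≤ ‖x‖ :=
  (Real.le_norm_self _).trans (norm_le_pi_norm x i)

lemma norm_le_one_of_mem_Icc {u : ι → ℝ} (hu : u ∈ Icc 0 1) : ‖u‖ ≤ 1 :=
  (pi_norm_le_iff_of_nonneg one_pos.le).2 fun i => by
    rw [Real.norm_of_nonneg (hu.1 i)]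
    exact hu.2 i

lemma add_smul_one_mem_sphere [Nonempty ι] {u : ι → ℝ} (hu : u ∈ Icc 0 1) :
    u + (1 - ‖u‖) • 1 ∈ sphere 0 1 ∩ Ici 0 := by
  have hmem : u + (1 - ‖u‖) • 1 ∈ Icc (0 : ι → ℝ) 1 := by
    refine ⟨add_nonneg hu.1 (smul_nonneg (sub_nonneg.2 (norm_le_one_of_mem_Icc hu)) zero_le_one),
      fun i => ?_⟩
    simpa using add_le_add_left (apply_le_norm u i) (1 - ‖u‖)
  obtain ⟨i, hi⟩ := Finite.exists_max u
  have hnorm : ‖u‖ ≤ u i := (pi_norm_le_iff_of_nonneg (hu.1 i)).2 fun j => by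
    rw [Real.norm_of_nonneg (hu.1 j)]
    exact hi j
  refine ⟨mem_sphere_zero_iff_norm.2 ((norm_le_one_of_mem_Icc hmem).antisymm ?_), hmem.1⟩
  calc 1 ≤ (u + (1 - ‖u‖) • 1) i := by simp; linarith
    _ ≤ ‖u + (1 - ‖u‖) • 1‖ := apply_le_norm _ i

lemma surjOn_stdSimplex {G : (ι → ℝ) → ι → ℝ} (hG : ContinuousOn G (sphere 0 1 ∩ Ici 0))
    (hmaps : MapsTo G (sphere 0 1 ∩ Ici 0) (stdSimplex ℝ ι))
    (hface : ∀ y ∈ sphere 0 1 ∩ Ici 0, ∀ i, y i = 0 → G y i = 0) :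
    SurjOn G (sphere 0 1 ∩ Ici 0) (stdSimplex ℝ ι) := by
  intro p hp
  have : Nonempty ι := by
    by_contra hempty
    have := not_nonempty_iff.1 hempty
    simpa using hp.2
  let y (u : ι → ℝ) : ι → ℝ := u + (1 - ‖u‖) • 1
  have hy {u : ι → ℝ} (hu : u ∈ Icc 0 1) : y u ∈ sphere 0 1 ∩ Ici 0 := add_smul_one_mem_sphere hu
  have hGy : ContinuousOn (fun u => G (y u) - p) (Icc 0 1) :=
    (hG.comp (by fun_prop) fun u => hy).sub continuousOn_const
  obtain ⟨u, hu, hup⟩ := exists_complementarity hGy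
  have hsum : ∑ i, G (y u) i = ∑ i, p i := (hmaps (hy hu)).2.trans hp.2.symm
  refine ⟨y u, hy hu, funext fun i => ?_⟩
  by_cases hnorm : ‖u‖ = 1
  · have hyu : y u = u := by simp [y, hnorm]
    have hle (i : ι) : G (y u) i ≤ p i := by
      rcases (hu.1 i).eq_or_lt with hui | hui
      · rw [hface _ (hy hu) i (by rw [hyu, ← hui, Pi.zero_apply])]
        exact hp.1 i
      · exact sub_nonpos.1 ((hup i).1 hui)
    exact (Finset.sum_eq_sum_iff_of_le fun i _ => hle i).1 hsum i (Finset.mem_univ i)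
  · have hge (i : ι) : p i ≤ G (y u) i := by
      refine sub_nonneg.1 ((hup i).2 ((hu.2 i).lt_of_ne fun hui => hnorm ?_))
      exact (norm_le_one_of_mem_Icc hu).antisymm (hui.ge.trans (apply_le_norm u i))
    exact ((Finset.sum_eq_sum_iff_of_le fun i _ => hge i).1 hsum.symm i (Finset.mem_univ i)).symm

end Surjectivity

section SignedSurjectivity

open Set Function Metric

variable {ι : Type*}

/-- The coordinate embedding of `support p → ℝ` into `ι → ℝ`, composed with the reflections that
take the nonnegative orthant to the orthant of `p`. -/
noncomputable def orthantEmbedding (p : ι → ℝ) (w : support p → ℝ) : ι → ℝ :=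
  extend Subtype.val (fun i => (SignType.sign (p i) : ℝ) * w i) 0

lemma orthantEmbedding_apply (p : ι → ℝ) (w : support p → ℝ) (i : support p) :
    orthantEmbedding p w i = SignType.sign (p i) * w i :=
  Subtype.val_injective.extend_apply (fun i => (SignType.sign (p i) : ℝ) * w i) 0 i

lemma orthantEmbedding_apply_of_notMem {p : ι → ℝ} (w : support p → ℝ) {i : ι}
    (hi : i ∉ support p) : orthantEmbedding p w i = 0 :=
  extend_apply' _ _ _ fun ⟨j, hj⟩ => hi (hj ▸ j.property)

lemma support_orthantEmbedding_subset (p : ι → ℝ) (w : support p → ℝ) :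
    support (orthantEmbedding p w) ⊆ support p :=
  fun _ hi => by_contra fun hip => hi (orthantEmbedding_apply_of_notMem w hip)

lemma abs_sign_of_ne_zero {r : ℝ} (hr : r ≠ 0) : |(SignType.sign r : ℝ)| = 1 := by
  rcases hr.lt_or_gt with hr | hr <;> simp [hr]

lemma abs_orthantEmbedding_apply (p : ι → ℝ) (w : support p → ℝ) (i : support p) :
    |orthantEmbedding p w i| = |w i| := by
  rw [orthantEmbedding_apply, abs_mul, abs_sign_of_ne_zero i.2, one_mul]

lemma continuous_orthantEmbedding (p : ι → ℝ) : Continuous (orthantEmbedding p) := by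
  refine continuous_pi fun i => ?_
  by_cases hi : i ∈ support p
  · exact (continuous_const.mul (continuous_apply (⟨i, hi⟩ : support p))).congr fun w =>
      (orthantEmbedding_apply p w ⟨i, hi⟩).symm
  · exact continuous_const.congr fun w => (orthantEmbedding_apply_of_notMem w hi).symm

lemma sign_orthantEmbedding_apply {p : ι → ℝ} {w : support p → ℝ} (hw : 0 ≤ w) {i : ι}
    (hi : orthantEmbedding p w i ≠ 0) :
    SignType.sign (orthantEmbedding p w i) = SignType.sign (p i) := by
  lift i to support p using support_orthantEmbedding_subset p w hi
  rw [orthantEmbedding_apply] at hi ⊢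
  rw [sign_mul, sign_pos ((hw i).lt_of_ne' (right_ne_zero_of_mul hi)), mul_one]
  rcases (i.2 : p i ≠ 0).lt_or_gt with hpi | hpi <;> simp [hpi]

variable [Fintype ι]

lemma norm_orthantEmbedding (p : ι → ℝ) [Fintype (support p)] (w : support p → ℝ) :
    ‖orthantEmbedding p w‖ = ‖w‖ := by
  refine le_antisymm ((pi_norm_le_iff_of_nonneg (norm_nonneg w)).2 fun i => ?_)
    ((pi_norm_le_iff_of_nonneg (norm_nonneg _)).2 fun i => ?_)
  · by_cases hi : i ∈ support p
    · exact (abs_orthantEmbedding_apply p w ⟨i, hi⟩).trans_le (norm_le_pi_norm w ⟨i, hi⟩)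
    · simp [orthantEmbedding_apply_of_notMem w hi]
  · exact (abs_orthantEmbedding_apply p w i).ge.trans (norm_le_pi_norm (orthantEmbedding p w) i)

lemma mapsTo_orthantEmbedding (p : ι → ℝ) [Fintype (support p)] :
    MapsTo (orthantEmbedding p) (sphere 0 1 ∩ Ici 0) (sphere 0 1) := fun w hw =>
  mem_sphere_zero_iff_norm.2 ((norm_orthantEmbedding p w).trans (mem_sphere_zero_iff_norm.1 hw.1))

/-- The unit sphere of the `ℓ¹` norm. -/
def l1Sphere (ι : Type*) [Fintype ι] : Set (ι → ℝ) := {x | ∑ i, |x i| = 1}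

lemma support_nonempty_of_mem_l1Sphere {x : ι → ℝ} (hx : x ∈ l1Sphere ι) :
    (support x).Nonempty := by
  rw [support_nonempty_iff]
  rintro rfl
  simp [l1Sphere] at hx

lemma restrict_abs_mem_stdSimplex {x : ι → ℝ} (hx : x ∈ l1Sphere ι) {s : Set ι} [Fintype s]
    (hxs : support x ⊆ s) : (fun i : s => |x i|) ∈ stdSimplex ℝ s := by
  refine ⟨fun i => abs_nonneg _, (Fintype.sum_of_injective Subtype.val Subtype.val_injective _
    (fun i => |x i|) (fun i hi => ?_) fun i => rfl).trans hx⟩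
  exact abs_eq_zero.2 (notMem_support.1 fun hix => hi ⟨⟨i, hxs hix⟩, rfl⟩)

lemma surjOn_abs_comp_orthantEmbedding {G : (ι → ℝ) → ι → ℝ} (hG : ContinuousOn G (sphere 0 1))
    (hmaps : MapsTo G (sphere 0 1) (l1Sphere ι)) {p : ι → ℝ} [Fintype (support p)]
    (hsupport : ∀ y ∈ sphere 0 1, support y ⊆ support p → support (G y) = support y) :
    SurjOn (fun w (i : support p) => |G (orthantEmbedding p w) i|) (sphere 0 1 ∩ Ici 0)
      (stdSimplex ℝ (support p)) := by
  have hGE {w : support p → ℝ} (hw : w ∈ sphere 0 1 ∩ Ici 0) :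
      support (G (orthantEmbedding p w)) = support (orthantEmbedding p w) :=
    hsupport _ (mapsTo_orthantEmbedding p hw) (support_orthantEmbedding_subset p w)
  refine surjOn_stdSimplex (continuousOn_pi.2 fun i => ?_) (fun w hw => ?_) fun w hw i hi => ?_
  · exact (continuousOn_pi.1 (hG.comp (continuous_orthantEmbedding p).continuousOn
      (mapsTo_orthantEmbedding p)) i).abs
  · exact restrict_abs_mem_stdSimplex (hmaps (mapsTo_orthantEmbedding p hw))
      ((hGE hw).trans_subset (support_orthantEmbedding_subset p w))
  · refine abs_eq_zero.2 (notMem_support.1 ?_)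
    rw [hGE hw, notMem_support, orthantEmbedding_apply, hi, mul_zero]

lemma exists_map_eq_of_signPattern_eq {G : (ι → ℝ) → ι → ℝ} (hG : ContinuousOn G (sphere 0 1))
    (hmaps : MapsTo G (sphere 0 1) (l1Sphere ι)) {p : ι → ℝ} (hp : p ∈ l1Sphere ι)
    (hpattern : ∀ y ∈ sphere 0 1, support y ⊆ support p → signPattern (G y) = signPattern y) :
    ∃ y ∈ sphere 0 1, support y ⊆ support p ∧ G y = p := by
  classical
  have hsupport (y : ι → ℝ) (hy : y ∈ sphere 0 1) (hyp : support y ⊆ support p) :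
      support (G y) = support y := by
    rw [← support_signPattern, hpattern y hy hyp, support_signPattern]
  obtain ⟨w, hw, hwp⟩ := surjOn_abs_comp_orthantEmbedding hG hmaps hsupport
    (restrict_abs_mem_stdSimplex hp Subset.rfl)
  let y := orthantEmbedding p w
  have hy : y ∈ sphere 0 1 := mapsTo_orthantEmbedding p hw
  have hyp : support y ⊆ support p := support_orthantEmbedding_subset p w
  refine ⟨y, hy, hyp, funext fun i => ?_⟩
  by_cases hi : i ∈ support p
  · have habs : |G y i| = |p i| := congrFun hwp ⟨i, hi⟩
    have hne : i ∈ support y := by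
      rw [← hsupport y hy hyp, mem_support, ← abs_ne_zero, habs]
      exact abs_ne_zero.2 hi
    have hsign : SignType.sign (G y i) = SignType.sign (p i) :=
      (congrFun (hpattern y hy hyp) i).trans (sign_orthantEmbedding_apply hw.2 hne)
    rw [← sign_mul_abs (G y i), hsign, habs, sign_mul_abs]
  · rw [notMem_support.1 hi, ← notMem_support, hsupport y hy hyp]
    exact fun hiy => hi (hyp hiy)

end SignedSurjectivity

section SignedUnitVectors

open Set Function Metric

variable {ι : Type*} [DecidableEq ι]

/-- The vectors `± eᵢ`: the vertices of the cross-polytope, and the points of either unit sphere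
with only one nonzero coordinate. -/
def signedUnitVectors (ι : Type*) [DecidableEq ι] : Set (ι → ℝ) :=
  {x | ∃ i ε, |ε| = 1 ∧ Pi.single i ε = x}

lemma single_mem_signedUnitVectors (i : ι) {ε : ℝ} (hε : |ε| = 1) :
    Pi.single i ε ∈ signedUnitVectors ι := ⟨i, ε, hε, rfl⟩

lemma neg_mem_signedUnitVectors {u : ι → ℝ} (hu : u ∈ signedUnitVectors ι) :
    -u ∈ signedUnitVectors ι := by
  obtain ⟨i, ε, hε, rfl⟩ := hu
  exact ⟨i, -ε, by rwa [abs_neg], by rw [Pi.single_neg]⟩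

lemma finite_signedUnitVectors [Finite ι] : (signedUnitVectors ι).Finite := by
  refine (Set.Finite.image2 Pi.single (finite_univ (α := ι)) (toFinite {(1 : ℝ), -1})).subset ?_
  rintro _ ⟨i, ε, hε, rfl⟩
  exact mem_image2_of_mem (mem_univ i) (eq_or_eq_neg_of_abs_eq hε)

lemma ncard_support_of_mem_signedUnitVectors {u : ι → ℝ} (hu : u ∈ signedUnitVectors ι) :
    (support u).ncard = 1 := by
  obtain ⟨i, ε, hε, rfl⟩ := hu
  rw [Pi.support_single_of_ne (by rintro rfl; simp at hε), ncard_singleton]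

lemma sign_single_apply_eq {i : ι} {r : ℝ} {x : ι → ℝ}
    (hr : SignType.sign r = SignType.sign (x i)) (l : ι) (hl : (Pi.single i r : ι → ℝ) l ≠ 0) :
    SignType.sign ((Pi.single i r : ι → ℝ) l) = SignType.sign (x l) := by
  obtain rfl : l = i := by_contra fun hli => hl (by simp [hli])
  rwa [Pi.single_eq_same]

lemma support_single_add_single {i j : ι} (hij : i ≠ j) {a b : ℝ} (ha : a ≠ 0) (hb : b ≠ 0) :
    support (Pi.single i a + Pi.single j b : ι → ℝ) = {i, j} := by
  ext l
  rcases eq_or_ne l i with rfl | hli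
  · simp [hij, ha]
  rcases eq_or_ne l j with rfl | hlj
  · simp [hij.symm, hb]
  · simp [hli, hlj]

variable [Fintype ι]

lemma single_add_single_mem_sphere {i j : ι} (hij : i ≠ j) {a b : ℝ} (ha : |a| = 1)
    (hb : |b| = 1) : (Pi.single i a + Pi.single j b : ι → ℝ) ∈ sphere 0 1 := by
  refine mem_sphere_zero_iff_norm.2 (le_antisymm
    ((pi_norm_le_iff_of_nonneg one_pos.le).2 fun l => ?_) ?_)
  · rcases eq_or_ne l i with rfl | hli
    · simp [hij, ha]
    rcases eq_or_ne l j with rfl | hlj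
    · simp [hij.symm, hb]
    · simp [hli, hlj]
  · have hi : ‖(Pi.single i a + Pi.single j b : ι → ℝ) i‖ = 1 := by simp [hij, ha]
    exact hi.ge.trans (norm_le_pi_norm _ i)

lemma signedUnitVectors_subset_sphere : signedUnitVectors ι ⊆ sphere 0 1 := by
  rintro _ ⟨i, ε, hε, rfl⟩
  rwa [mem_sphere_zero_iff_norm, Pi.norm_single, Real.norm_eq_abs]

lemma mem_signedUnitVectors_of_ncard_support_le_one {x : ι → ℝ} (hx : x ∈ l1Sphere ι)
    (hcard : (support x).ncard ≤ 1) : x ∈ signedUnitVectors ι := by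
  obtain ⟨i, hi⟩ := ncard_eq_one.1
    (hcard.antisymm (support_nonempty_of_mem_l1Sphere hx).ncard_pos)
  have hzero (j : ι) (hj : j ≠ i) : x j = 0 := notMem_support.1 (by rwa [hi])
  refine ⟨i, x i, ?_, ?_⟩
  · rw [← hx]
    exact (Fintype.sum_eq_single i fun j hj => abs_eq_zero.2 (hzero j hj)).symm
  · funext j
    rcases eq_or_ne j i with rfl | hj
    · simp
    · simp [hj, hzero]

end SignedUnitVectors

section SupportNonincreasing

open Set Function Metric

variable {ι : Type*} [Fintype ι]

/-- `F` restricts to a continuous injection from the unit sphere of the supremum norm to that of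
the `ℓ¹` norm which does not increase the size of the support. The values of `F` off the sphere are
irrelevant. -/
structure IsSupportNonincreasingEmbedding (F : (ι → ℝ) → ι → ℝ) : Prop where
  mapsTo : MapsTo F (sphere 0 1) (l1Sphere ι)
  continuousOn : ContinuousOn F (sphere 0 1)
  injOn : InjOn F (sphere 0 1)
  ncard_support_le : ∀ x ∈ sphere 0 1, (support (F x)).ncard ≤ (support x).ncard

namespace IsSupportNonincreasingEmbedding

variable {F : (ι → ℝ) → ι → ℝ}

lemma sign_map_apply_eq (hF : IsSupportNonincreasingEmbedding F) {x y : ι → ℝ}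
    {m : ℕ} (hcard : ∀ z ∈ openCell (signPattern x), (support (F z)).ncard = m)
    (hx : x ∈ sphere 0 1) (hy : y ∈ sphere 0 1)
    (hyx : ∀ i, y i ≠ 0 → SignType.sign (y i) = SignType.sign (x i)) {i : ι} (hi : F y i ≠ 0) :
    SignType.sign (F y i) = SignType.sign (F x i) :=
  sign_eq_of_mem_closure hF.continuousOn (fun _ hz => hz.1) (isPreconnected_openCell _) hcard
    ⟨hx, rfl⟩ hy (mem_closure_openCell (ne_zero_of_mem_unit_sphere ⟨x, hx⟩) hy hyx) hi

lemma smul_comp_perm (hF : IsSupportNonincreasingEmbedding F) {s : ι → ℝ} (hs : ∀ i, |s i| = 1)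
    (π : Equiv.Perm ι) : IsSupportNonincreasingEmbedding fun x i => s i * F x (π i) := by
  have hs0 (i : ι) : s i ≠ 0 := abs_ne_zero.1 ((hs i).trans_ne one_ne_zero)
  refine ⟨fun x hx => ?_, ?_, fun x hx y hy hxy => hF.injOn hx hy ?_, fun x hx => ?_⟩
  · simp only [l1Sphere, mem_ofPred_eq, abs_mul, hs, one_mul]
    exact (Equiv.sum_comp π fun i => |F x i|).trans (hF.mapsTo hx)
  · exact continuousOn_pi.2 fun i =>
      continuousOn_const.mul (continuousOn_pi.1 hF.continuousOn (π i))
  · funext i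
    obtain ⟨j, rfl⟩ := π.surjective i
    exact mul_left_cancel₀ (hs0 j) (congrFun hxy j)
  · have hsupport : (support fun i => s i * F x (π i)) = π ⁻¹' support (F x) := by
      ext i
      simp [hs0]
    rw [hsupport, ← ncard_image_of_injective _ π.injective, image_preimage_eq _ π.surjective]
    exact hF.ncard_support_le x hx

lemma ncard_support_map_eq (hF : IsSupportNonincreasingEmbedding F) {x : ι → ℝ}
    (hx : x ∈ sphere 0 1) (hpattern : ∀ y ∈ sphere 0 1,
      (support y).ncard < (support x).ncard → signPattern (F y) = signPattern y) :
    (support (F x)).ncard = (support x).ncard := by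
  refine (hF.ncard_support_le x hx).eq_of_not_lt fun hlt => ?_
  obtain ⟨y, hy, hyx, heq⟩ := exists_map_eq_of_signPattern_eq hF.continuousOn hF.mapsTo
    (hF.mapsTo hx) fun y hy hyx => hpattern y hy ((ncard_le_ncard hyx).trans_lt hlt)
  rw [hF.injOn hy hx heq] at hyx
  exact (ncard_le_ncard hyx).not_gt hlt

lemma bijOn_signedUnitVectors [DecidableEq ι] (hF : IsSupportNonincreasingEmbedding F) :
    BijOn F (signedUnitVectors ι) (signedUnitVectors ι) := by
  have hmaps : MapsTo F (signedUnitVectors ι) (signedUnitVectors ι) := fun u hu => by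
    have hu1 := signedUnitVectors_subset_sphere hu
    exact mem_signedUnitVectors_of_ncard_support_le_one (hF.mapsTo hu1)
      ((hF.ncard_support_le u hu1).trans_eq (ncard_support_of_mem_signedUnitVectors hu))
  exact (finite_signedUnitVectors.injOn_iff_bijOn_of_mapsTo hmaps).1
    (hF.injOn.mono signedUnitVectors_subset_sphere)

lemma one_lt_ncard_support_map (hF : IsSupportNonincreasingEmbedding F) {x : ι → ℝ}
    (hx : x ∈ sphere 0 1) (hcard : 1 < (support x).ncard) : 1 < (support (F x)).ncard := by
  classical
  by_contra hle
  obtain ⟨u, hu, hux⟩ := hF.bijOn_signedUnitVectors.surjOn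
    (mem_signedUnitVectors_of_ncard_support_le_one (hF.mapsTo hx) (not_lt.1 hle))
  rw [← hF.injOn (signedUnitVectors_subset_sphere hu) hx hux,
    ncard_support_of_mem_signedUnitVectors hu] at hcard
  exact hcard.false

lemma map_single_ne_neg_map_single [DecidableEq ι] (hF : IsSupportNonincreasingEmbedding F)
    {i j : ι} (hij : i ≠ j) {a b : ℝ} (ha : |a| = 1) (hb : |b| = 1) :
    F (Pi.single i a) ≠ -F (Pi.single j b) := by
  intro heq
  let x : ι → ℝ := Pi.single i a + Pi.single j b
  have hx : x ∈ sphere 0 1 := single_add_single_mem_sphere hij ha hb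
  have hsupport : (support x).ncard = 2 := by
    rw [support_single_add_single hij (abs_ne_zero.1 (ha.trans_ne one_ne_zero))
      (abs_ne_zero.1 (hb.trans_ne one_ne_zero)), ncard_pair hij]
  have hcard : ∀ z ∈ openCell (signPattern x), (support (F z)).ncard = 2 := fun z hz => by
    have hz2 : (support z).ncard = 2 := by rw [support_eq_of_mem_openCell hz, hsupport]
    exact ((hF.ncard_support_le z hz.1).trans_eq hz2).antisymm
      (hF.one_lt_ncard_support_map hz.1 (by rw [hz2]; exact one_lt_two))
  have hu := signedUnitVectors_subset_sphere (single_mem_signedUnitVectors i ha)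
  have hv := signedUnitVectors_subset_sphere (single_mem_signedUnitVectors j hb)
  obtain ⟨l, hl⟩ := support_nonempty_of_mem_l1Sphere (hF.mapsTo hv)
  have hsignu := hF.sign_map_apply_eq hcard hx hu (sign_single_apply_eq (by simp [x, hij]))
    (i := l) (by rw [heq]; exact neg_ne_zero.2 hl)
  have hsignv := hF.sign_map_apply_eq hcard hx hv (sign_single_apply_eq (by simp [x, hij.symm])) hl
  rw [← hsignv, heq, Pi.neg_apply, Left.sign_neg, eq_comm, SignType.self_eq_neg_iff] at hsignu
  exact hl (sign_eq_zero_iff.1 hsignu)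

lemma map_neg [DecidableEq ι] (hF : IsSupportNonincreasingEmbedding F) {u : ι → ℝ}
    (hu : u ∈ signedUnitVectors ι) : F (-u) = -F u := by
  obtain ⟨v, hv, hvu⟩ := hF.bijOn_signedUnitVectors.surjOn
    (neg_mem_signedUnitVectors (hF.bijOn_signedUnitVectors.mapsTo hu))
  suffices v = -u by rw [← this, hvu]
  obtain ⟨i, a, ha, rfl⟩ := hu
  obtain ⟨j, b, hb, rfl⟩ := hv
  obtain rfl : j = i := by_contra fun hji => hF.map_single_ne_neg_map_single hji hb ha hvu
  rcases abs_eq_abs.1 (hb.trans ha.symm) with rfl | rfl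
  · obtain ⟨l, hl⟩ := support_nonempty_of_mem_l1Sphere
      (hF.mapsTo (signedUnitVectors_subset_sphere (single_mem_signedUnitVectors j hb)))
    exact absurd (self_eq_neg.1 (congrFun hvu l)) hl
  · rw [Pi.single_neg]

lemma exists_perm_map_single [DecidableEq ι] (hF : IsSupportNonincreasingEmbedding F) :
    ∃ (π : Equiv.Perm ι) (s : ι → ℝ), (∀ i, |s i| = 1) ∧
      ∀ i ε, |ε| = 1 → F (Pi.single i ε) = Pi.single (π i) (s i * ε) := by
  have hmem (i : ι) : F (Pi.single i 1) ∈ signedUnitVectors ι :=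
    hF.bijOn_signedUnitVectors.mapsTo (single_mem_signedUnitVectors i abs_one)
  choose π s hs hπ using hmem
  have hmap (i : ι) (ε : ℝ) (hε : |ε| = 1) : F (Pi.single i ε) = Pi.single (π i) (s i * ε) := by
    rcases eq_or_eq_neg_of_abs_eq hε with rfl | rfl
    · rw [← hπ, mul_one]
    · rw [Pi.single_neg, hF.map_neg (single_mem_signedUnitVectors i abs_one), ← hπ, mul_neg_one,
        Pi.single_neg]
  have hπinj : Injective π := by
    intro i j hij
    have hmap' (i : ι) : F (Pi.single i (s i)) = Pi.single (π i) 1 := by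
      rw [hmap i _ (hs i), ← abs_mul_abs_self, hs, one_mul]
    have heq := hF.injOn (signedUnitVectors_subset_sphere (single_mem_signedUnitVectors i (hs i)))
      (signedUnitVectors_subset_sphere (single_mem_signedUnitVectors j (hs j)))
      ((hmap' i).trans (hij ▸ (hmap' j).symm))
    by_contra hne
    refine abs_ne_zero.1 ((hs i).trans_ne one_ne_zero) ?_
    simpa [hne] using congrFun heq i
  exact ⟨Equiv.ofBijective π (Finite.injective_iff_bijective.1 hπinj), s, hs, hmap⟩

lemma signPattern_map_eq [DecidableEq ι] (hF : IsSupportNonincreasingEmbedding F)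
    (hfix : ∀ u ∈ signedUnitVectors ι, F u = u) {x : ι → ℝ} (hx : x ∈ sphere 0 1) :
    signPattern (F x) = signPattern x := by
  induction hn : (support x).ncard using Nat.strong_induction_on generalizing x with
  | h n ih =>
    subst hn
    have hcard : ∀ z ∈ openCell (signPattern x), (support (F z)).ncard = (support x).ncard := by
      rintro z ⟨hz, hzx⟩
      have hsupport : support z = support x := support_eq_of_mem_openCell ⟨hz, hzx⟩
      rw [← hsupport] at ih ⊢
      exact hF.ncard_support_map_eq hz fun y hy hlt => ih _ hlt hy rfl
    have hsign (i : ι) (hi : x i ≠ 0) : SignType.sign (F x i) = SignType.sign (x i) := by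
      let u : ι → ℝ := Pi.single i (SignType.sign (x i) : ℝ)
      have hu : u ∈ signedUnitVectors ι := single_mem_signedUnitVectors i (abs_sign_of_ne_zero hi)
      have hui : SignType.sign (u i) = SignType.sign (x i) := by
        rcases hi.lt_or_gt with hi | hi <;> simp [u, hi]
      have hFui : F u i ≠ 0 := by rwa [hfix u hu, ← sign_ne_zero, hui, sign_ne_zero]
      rw [← hF.sign_map_apply_eq hcard hx (signedUnitVectors_subset_sphere hu)
        (sign_single_apply_eq (by simpa [u] using hui)) hFui, hfix u hu, hui]
    have hsub : support x ⊆ support (F x) := fun i hi => by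
      rw [mem_support, ← sign_ne_zero, hsign i hi]
      exact sign_ne_zero.2 hi
    have heq := eq_of_subset_of_ncard_le hsub (hcard x ⟨hx, rfl⟩).le
    funext i
    by_cases hi : x i = 0
    · have hFi : F x i = 0 := notMem_support.1 fun hFi => (heq ▸ hFi : i ∈ support x) hi
      simp [signPattern, hi, hFi]
    · exact hsign i hi

theorem exists_perm_support_eq_image (hF : IsSupportNonincreasingEmbedding F) :
    ∃ π : Equiv.Perm ι, ∀ x ∈ sphere 0 1, support (F x) = π '' support x := by
  classical
  obtain ⟨π, s, hs, hmap⟩ := hF.exists_perm_map_single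
  have hs0 (i : ι) : s i ≠ 0 := abs_ne_zero.1 ((hs i).trans_ne one_ne_zero)
  let G (x : ι → ℝ) (i : ι) : ℝ := s i * F x (π i)
  have hfix : ∀ u ∈ signedUnitVectors ι, G u = u := by
    rintro _ ⟨i, ε, hε, rfl⟩
    funext j
    rcases eq_or_ne j i with rfl | hji
    · simp [G, hmap j ε hε, ← mul_assoc, ← abs_mul_abs_self (s j), hs]
    · simp [G, hmap i ε hε, hji]
  refine ⟨π, fun x hx => ?_⟩
  have hsupport : support x = π ⁻¹' support (F x) := by
    rw [← support_signPattern, ← (hF.smul_comp_perm hs π).signPattern_map_eq hfix hx,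
      support_signPattern]
    ext i
    simp [hs0]
  rw [hsupport, image_preimage_eq _ π.surjective]

end IsSupportNonincreasingEmbedding

end SupportNonincreasing

lemma supNorm_eq_norm {k : ℕ} (x : Fin k → ℝ) : supNorm x = ‖x‖ := by
  rcases isEmpty_or_nonempty (Fin k) with hempty | hnonempty
  · rw [Subsingleton.elim x 0, norm_zero]
    simp [supNorm]
  · refine le_antisymm (ciSup_le fun i => norm_le_pi_norm x i) ?_
    exact (pi_norm_le_iff_of_nonempty _).2 fun i =>
      le_ciSup (f := fun i => |x i|) (Set.finite_range _).bddAbove i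

/-- Lemma 4.6 of the paper: if `F : S_{ℓ∞^k} → S_{ℓ1^k}` is injective,
continuous and does not increase support size, then for some permutation `π` the map
`F ∘ P_π` is support preserving; in particular `F` preserves support size. -/
theorem stmt_13 (k : ℕ) (F : (Fin k → ℝ) → (Fin k → ℝ))
    (hFmaps : ∀ x, supNorm x = 1 → l1Norm (F x) = 1)
    (hcont : ContinuousOn F {x | supNorm x = 1})
    (hinj : Set.InjOn F {x | supNorm x = 1})
    (hsupp : ∀ x, supNorm x = 1 → {i | F x i ≠ 0}.ncard ≤ {i | x i ≠ 0}.ncard) :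
    (∃ π : Equiv.Perm (Fin k), ∀ x : Fin k → ℝ, supNorm x = 1 →
      ∀ i, (F (x ∘ π) i ≠ 0 ↔ x i ≠ 0)) ∧
    ∀ x, supNorm x = 1 → {i | F x i ≠ 0}.ncard = {i | x i ≠ 0}.ncard := by
  have hsphere : {x : Fin k → ℝ | supNorm x = 1} = Metric.sphere 0 1 := by
    ext x
    rw [Set.mem_ofPred_eq, supNorm_eq_norm, mem_sphere_zero_iff_norm]
  have hmem (x : Fin k → ℝ) : supNorm x = 1 ↔ x ∈ Metric.sphere 0 1 := by rw [← hsphere]; rfl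
  rw [hsphere] at hcont hinj
  simp only [hmem] at hFmaps hsupp ⊢
  have hF : IsSupportNonincreasingEmbedding F := ⟨hFmaps, hcont, hinj, hsupp⟩
  obtain ⟨π, hπ⟩ := hF.exists_perm_support_eq_image
  refine ⟨⟨π, fun x hx i => ?_⟩, fun x hx => ?_⟩
  · have hxπ : x ∘ π ∈ Metric.sphere 0 1 :=
      (hmem _).1 ((π.iSup_comp (g := fun i => |x i|)).trans ((hmem x).2 hx))
    have hsupport : Function.support (F (x ∘ π)) = Function.support x := by
      rw [hπ _ hxπ, Function.support_comp_eq_preimage, Set.image_preimage_eq _ π.surjective]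
    exact Set.ext_iff.1 hsupport i
  · exact (congrArg Set.ncard (hπ x hx)).trans (Set.ncard_image_of_injective _ π.injective)
end
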